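/- arXiv:1412.1278 — 3 statements merged into one kernel-verified Lean document; each statement's English description precedes it below -/
import Mathlib

section
/- Suppose f(x,y) is a semidegenerate kernel on (0,1)² satisfying conditions [C1]–[C3], and suppose u is a solution of the integral equation u(y) = ∫_0^1 u(x) f(x,y) dx, 0 < y < 1, which is integrable on (0,1). Then u is continuous on (0,1). -/
/-!
Splitting the integral at `x = y`, the equation reads
`u y = ∑ i, a i y * ∫₀ʸ u * b i + ∑ j, c j y * ∫ᵧ¹ u * d j`.
A piecewise continuous function is bounded on compact subsets of its domain
(`PCOn.exists_bound`), so each `u * b i` is integrable on `[0, q]` for `q < 1` and each `u * d j` on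
`[p, 1]` for `p > 0` (`PiecewiseContinuousOn.integrableOn_mul`). Hence the splitting is legitimate,
and the right-hand side is built from the continuous functions `a i`, `c j` and from primitives of
integrable functions, which are continuous.
-/

open MeasureTheory Filter Topology Set

/-- `f` is piecewise continuous on `s` with (finite) exceptional set `S`: it is continuous
within `s` off `S`, and has one-sided limits at every point of `S`. -/
def PCOn (f : ℝ → ℝ) (s : Set ℝ) (S : Finset ℝ) : Prop :=
  (∀ x ∈ s \ (S : Set ℝ), ContinuousWithinAt f s x) ∧
    ∀ x ∈ S, (∃ L, Tendsto f (nhdsWithin x (Iio x)) (nhds L)) ∧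
      ∃ L, Tendsto f (nhdsWithin x (Ioi x)) (nhds L)

/-- `f` is piecewise continuous on `s`: continuous off a finite set, with one-sided limits at
the exceptional points. -/
def PiecewiseContinuousOn (f : ℝ → ℝ) (s : Set ℝ) : Prop :=
  ∃ S : Finset ℝ, PCOn f s S

/-- A piecewise continuous function is bounded on compact subsets of its domain: it is bounded near
every point, at an exceptional point because of the two one-sided limits. -/
lemma PCOn.exists_bound {f : ℝ → ℝ} {s K : Set ℝ} {S : Finset ℝ} (h : PCOn f s S)
    (hK : IsCompact K) (hKs : K ⊆ s) : ∃ C, ∀ x ∈ K, ‖f x‖ ≤ C := by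
  have near {l : Filter ℝ} {L : ℝ} (hl : Tendsto f l (𝓝 L)) : ∃ C, ∀ᶠ x in l, ‖f x‖ ≤ C :=
    ⟨‖L‖ + 1, (hl.norm.eventually_lt_const (lt_add_one _)).mono fun _ hx => hx.le⟩
  refine hK.induction_on (p := fun t => ∃ C, ∀ x ∈ t, ‖f x‖ ≤ C) ⟨0, by simp⟩ ?_ ?_ ?_
  · rintro t t' htt' ⟨C, hC⟩
    exact ⟨C, fun x hx => hC x (htt' hx)⟩
  · rintro t t' ⟨C, hC⟩ ⟨C', hC'⟩
    refine ⟨max C C', ?_⟩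
    rintro x (hx | hx)
    · exact (hC x hx).trans (le_max_left _ _)
    · exact (hC' x hx).trans (le_max_right _ _)
  · intro x hx
    by_cases hxS : x ∈ S
    · obtain ⟨⟨L, hL⟩, ⟨R, hR⟩⟩ := h.2 x hxS
      obtain ⟨C₁, h₁⟩ := near hL
      obtain ⟨C₂, h₂⟩ := near hR
      refine ⟨{y | ‖f y‖ ≤ max (max C₁ C₂) ‖f x‖}, mem_nhdsWithin_of_mem_nhds ?_, _,
        fun y hy => hy⟩
      rw [eventually_nhdsWithin_iff] at h₁ h₂
      filter_upwards [h₁, h₂] with y hy₁ hy₂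
      rcases lt_trichotomy y x with hyx | hyx | hyx
      · exact (hy₁ hyx).trans ((le_max_left C₁ C₂).trans (le_max_left _ _))
      · rw [hyx]
        exact le_max_right _ _
      · exact (hy₂ hyx).trans ((le_max_right C₁ C₂).trans (le_max_left _ _))
    · obtain ⟨C, hC⟩ := near (h.1 x ⟨hKs hx, hxS⟩)
      exact ⟨_, nhdsWithin_mono x hKs hC, C, fun y hy => hy⟩

lemma PiecewiseContinuousOn.integrableOn_mul {f u : ℝ → ℝ} {s K : Set ℝ}
    (h : PiecewiseContinuousOn f s) (hK : IsCompact K) (hKs : K ⊆ s) (hu : IntegrableOn u K) :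
    IntegrableOn (fun x => u x * f x) K := by
  obtain ⟨S, hS⟩ := h
  obtain ⟨C, hC⟩ := hS.exists_bound hK hKs
  -- The finite exceptional set is null, and `f` is continuous on the rest of `K`.
  have hmeas : AEStronglyMeasurable f (volume.restrict K) := by
    have hc : ContinuousOn f (K \ (S : Set ℝ)) := fun x hx =>
      (hS.1 x ⟨hKs hx.1, hx.2⟩).mono fun y hy => hKs hy.1
    have hm := hc.aestronglyMeasurable (μ := volume)
      (hK.measurableSet.diff S.finite_toSet.measurableSet)
    rwa [Measure.restrict_congr_set
      (sdiff_null_ae_eq_self (S.finite_toSet.measure_zero volume))] at hm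
  exact Integrable.mul_bdd hu hmeas
    ((ae_restrict_iff' hK.measurableSet).2 (Eventually.of_forall hC))

/-- If `f(x,y)` is a semidegenerate kernel on `(0,1)²` satisfying [C1]--[C3] and `u` is an
integrable solution of `u(y) = ∫₀¹ u(x) f(x,y) dx` on `(0,1)`, then `u` is continuous
on `(0,1)`. -/
theorem stmt6 (N M : ℕ) (hN : 1 ≤ N) (hM : 1 ≤ M)
    (a b : Fin N → ℝ → ℝ) (c d : Fin M → ℝ → ℝ) (f : ℝ → ℝ → ℝ)
    (hfu : ∀ x y : ℝ, 0 ≤ x → x < y → y < 1 → f x y = ∑ i, a i y * b i x)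
    (hfl : ∀ x y : ℝ, 0 < y → y ≤ x → x ≤ 1 → f x y = ∑ j, c j y * d j x)
    (hC1a : ∀ i, ContinuousOn (a i) (Ioo 0 1))
    (hC1c : ∀ j, ContinuousOn (c j) (Ioo 0 1))
    (hC2 : ∀ i, PiecewiseContinuousOn (b i) (Ico 0 1))
    (hC3 : ∀ j, PiecewiseContinuousOn (d j) (Ioc 0 1))
    (u : ℝ → ℝ) (hu : IntegrableOn u (Ioo 0 1))
    (hsol : ∀ y ∈ Ioo (0 : ℝ) 1, u y = ∫ x in Ioo (0 : ℝ) 1, u x * f x y) :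
    ContinuousOn u (Ioo 0 1) := by
  have hu' : IntegrableOn u (Icc 0 1) := (integrableOn_Icc_iff_integrableOn_Ioo (by simp) (by simp)).2 hu
  have hb : ∀ i, ∀ q < 1, IntegrableOn (fun x => u x * b i x) (Icc 0 q) := fun i q hq =>
    (hC2 i).integrableOn_mul isCompact_Icc (fun x hx => ⟨hx.1, hx.2.trans_lt hq⟩)
      (hu'.mono_set (Icc_subset_Icc_right hq.le))
  have hd : ∀ j, ∀ p > 0, IntegrableOn (fun x => u x * d j x) (Icc p 1) := fun j p hp =>
    (hC3 j).integrableOn_mul isCompact_Icc (fun x hx => ⟨hp.trans_le hx.1, hx.2⟩)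
      (hu'.mono_set (Icc_subset_Icc_left hp.le))
  have key : ∀ y ∈ Ioo (0 : ℝ) 1, u y =
      ∑ i, a i y * (∫ x in (0 : ℝ)..y, u x * b i x) +
        ∑ j, c j y * ∫ x in y..1, u x * d j x := by
    intro y hy
    have hib : ∀ i ∈ Finset.univ, IntegrableOn (fun x => a i y * (u x * b i x)) (Ioo 0 y) :=
      fun i _ => ((hb i y hy.2).mono_set Ioo_subset_Icc_self).const_mul _
    have hid : ∀ j ∈ Finset.univ, IntegrableOn (fun x => c j y * (u x * d j x)) (Ico y 1) :=
      fun j _ => ((hd j y hy.1).mono_set Ico_subset_Icc_self).const_mul _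
    have e₁ : EqOn (fun x => ∑ i, a i y * (u x * b i x)) (fun x => u x * f x y) (Ioo 0 y) := by
      intro x hx
      simp only [hfu x y hx.1.le hx.2 hy.2, Finset.mul_sum]
      exact Finset.sum_congr rfl fun i _ => by ring
    have e₂ : EqOn (fun x => ∑ j, c j y * (u x * d j x)) (fun x => u x * f x y) (Ico y 1) := by
      intro x hx
      simp only [hfl x y hy.1 hx.1 hx.2.le, Finset.mul_sum]
      exact Finset.sum_congr rfl fun i _ => by ring
    have i₁ : IntegrableOn (fun x => u x * f x y) (Ioo 0 y) :=
      IntegrableOn.congr_fun (integrable_finsetSum _ hib) e₁ measurableSet_Ioo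
    have i₂ : IntegrableOn (fun x => u x * f x y) (Ico y 1) :=
      IntegrableOn.congr_fun (integrable_finsetSum _ hid) e₂ measurableSet_Ico
    have hdisj : Disjoint (Ioo 0 y) (Ico y 1) :=
      Set.disjoint_left.2 fun x hx hx' => absurd hx.2 (not_lt.2 hx'.1)
    rw [hsol y hy, ← Ioo_union_Ico_eq_Ioo hy.1 hy.2.le,
      setIntegral_union hdisj measurableSet_Ico i₁ i₂,
      ← setIntegral_congr_fun measurableSet_Ioo e₁, ← setIntegral_congr_fun measurableSet_Ico e₂,
      integral_finsetSum _ hib, integral_finsetSum _ hid]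
    simp only [integral_const_mul, intervalIntegral.integral_of_le hy.1.le,
      intervalIntegral.integral_of_le hy.2.le, integral_Ioc_eq_integral_Ioo,
      integral_Ico_eq_integral_Ioo]
  refine ContinuousOn.congr ?_ key
  intro y hy
  obtain ⟨p, hp, hpy⟩ := exists_between hy.1
  obtain ⟨q, hyq, hq⟩ := exists_between hy.2
  have hB : ∀ i, ContinuousAt (fun y => ∫ x in (0 : ℝ)..y, u x * b i x) y := fun i => by
    have h0q : (0 : ℝ) ≤ q := (hy.1.trans hyq).le
    have := intervalIntegral.continuousOn_primitive_interval
      (f := fun x => u x * b i x) (μ := volume) (a := 0) (b := q)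
      (by rw [uIcc_of_le h0q]; exact hb i q hq)
    rw [uIcc_of_le h0q] at this
    exact this.continuousAt (Icc_mem_nhds hy.1 hyq)
  have hD : ∀ j, ContinuousAt (fun y => ∫ x in y..1, u x * d j x) y := fun j => by
    have hp1 : p ≤ 1 := (hpy.trans hy.2).le
    have := intervalIntegral.continuousOn_primitive_interval_left
      (f := fun x => u x * d j x) (μ := volume) (a := p) (b := 1)
      (by rw [uIcc_of_le hp1]; exact hd j p hp)
    rw [uIcc_of_le hp1] at this
    exact this.continuousAt (Icc_mem_nhds hpy hy.2)
  exact (tendsto_finsetSum _ fun i _ =>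
      (hC1a i y hy).mul (hB i).continuousWithinAt).add
    (tendsto_finsetSum _ fun j _ => (hC1c j y hy).mul (hD j).continuousWithinAt)
end

section
/- Suppose f(x,y) is a semidegenerate kernel on (0,1)² satisfying conditions [C1]–[C3], and let S be the (finite) union of the discontinuity sets of the b_i and d_j. Let α_i (i = 1,…,N) and β_j (j = 1,…,M) be continuous functions on (0,1) such that, with u(y) := Σ_{i=1}^N a_i(y) α_i(y) + Σ_{j=1}^M c_j(y) β_j(y), one has α_i′(y) = b_i(y) u(y) and −β_j′(y) = d_j(y) u(y) for all y ∈ (0,1) \ S, the boundary conditions α_i(0+) = 0 and β_j(1−) = 0 hold, and u is integrable on (0,1). Then u is a solution of the integral equation u(y) = ∫_0^1 u(x) f(x,y) dx for 0 < y < 1. -/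
/-!
Each `α i` is continuous on `(0,1)` and differentiable off a finite set with derivative `b i * u`.
Piecewise continuity makes `b i` bounded on `[0,y]` (`PCOn.exists_bound`), so `b i * u` is
integrable on `(0,y)` (`PCOn.intervalIntegrable_mul`). The fundamental theorem of calculus
(`integral_eq_sub_of_tendsto_off_finite`), with `α i (0+) = 0`, then gives
`α i y = ∫ x in 0..y, b i x * u x`. In the same way `β j y = ∫ x in y..1, d j x * u x`.
Substituting both in `u y = ∑ a i y * α i y + ∑ c j y * β j y` and reading the sums as the two
branches of the kernel, below and above `y`, yields the integral equation.
-/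

open MeasureTheory Filter Topology Set

/-- A piecewise continuous function is bounded on compact intervals: it is bounded near every
point, and finitely many of the neighbourhoods suffice. -/
lemma PCOn.exists_bound_s8 {g : ℝ → ℝ} {s : Set ℝ} {S : Finset ℝ} (hg : PCOn g s S) {p q : ℝ}
    (hpq : Icc p q ⊆ s) : ∃ C, ∀ z ∈ Icc p q, ‖g z‖ ≤ C := by
  refine isCompact_Icc.induction_on (p := fun t => ∃ C, ∀ z ∈ t, ‖g z‖ ≤ C) ⟨0, by simp⟩ ?_ ?_ ?_
  · rintro t t' htt' ⟨C, hC⟩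
    exact ⟨C, fun z hz => hC z (htt' hz)⟩
  · rintro t t' ⟨C, hC⟩ ⟨C', hC'⟩
    refine ⟨max C C', fun z hz => ?_⟩
    rcases hz with hz | hz
    · exact (hC z hz).trans (le_max_left _ _)
    · exact (hC' z hz).trans (le_max_right _ _)
  · intro x hx
    have key : ∀ (l : Filter ℝ) (L : ℝ), Tendsto g l (𝓝 L) → ∀ᶠ z in l, ‖g z‖ ≤ ‖L‖ + 1 :=
      fun l L h => (h.norm.eventually (gt_mem_nhds (lt_add_one _))).mono fun _ hz => hz.le
    by_cases hxS : x ∈ S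
    · obtain ⟨⟨L, hL⟩, R, hR⟩ := hg.2 x hxS
      have hl := eventually_nhdsWithin_iff.1 (key _ _ hL)
      have hr := eventually_nhdsWithin_iff.1 (key _ _ hR)
      refine ⟨_, mem_nhdsWithin_of_mem_nhds (hl.and hr),
        max ‖g x‖ (max (‖L‖ + 1) (‖R‖ + 1)), fun z hz => ?_⟩
      rcases lt_trichotomy z x with h | h | h
      · exact (hz.1 h).trans ((le_max_left _ _).trans (le_max_right _ _))
      · rw [h]; exact le_max_left _ _
      · exact (hz.2 h).trans ((le_max_right _ _).trans (le_max_right _ _))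
    · exact ⟨_, nhdsWithin_mono x hpq (key _ _ (hg.1 x ⟨hpq hx, hxS⟩)), ‖g x‖ + 1, fun z hz => hz⟩

lemma PCOn.intervalIntegrable_mul {g u : ℝ → ℝ} {s : Set ℝ} {S : Finset ℝ} (hg : PCOn g s S)
    {p q : ℝ} (hle : p ≤ q) (hpq : Icc p q ⊆ s) (hu : IntegrableOn u (Ioo p q)) :
    IntervalIntegrable (fun x => g x * u x) volume p q := by
  obtain ⟨C, hC⟩ := hg.exists_bound_s8 hpq
  rw [intervalIntegrable_iff_integrableOn_Ioo_of_le hle]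
  -- The finite set `S`, where `g` may be discontinuous, is null and can be removed.
  have hae : (Ioo p q \ (S : Set ℝ) : Set ℝ) =ᵐ[volume] Ioo p q :=
    sdiff_null_ae_eq_self (S.finite_toSet.measure_zero _)
  have hcont : ContinuousOn g (Ioo p q \ (S : Set ℝ)) := fun x hx =>
    (hg.1 x ⟨hpq (Ioo_subset_Icc_self hx.1), hx.2⟩).mono
      (sdiff_subset.trans (Ioo_subset_Icc_self.trans hpq))
  have hmeas : AEStronglyMeasurable g (volume.restrict (Ioo p q)) := by
    rw [← Measure.restrict_congr_set hae]
    exact hcont.aestronglyMeasurable (measurableSet_Ioo.diff S.finite_toSet.measurableSet)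
  exact Integrable.bdd_mul (c := C) hu hmeas
    ((ae_restrict_mem measurableSet_Ioo).mono fun x hx => hC x (Ioo_subset_Icc_self hx))

/-- The fundamental theorem of calculus for a function given on an open interval, with one-sided
limits at the endpoints, that may fail to be differentiable at finitely many points. -/
lemma integral_eq_sub_of_tendsto_off_finite {F F' : ℝ → ℝ} {p q A B : ℝ} (hpq : p < q)
    (S : Finset ℝ) (hc : ContinuousOn F (Ioo p q)) (hA : Tendsto F (𝓝[>] p) (𝓝 A))
    (hB : Tendsto F (𝓝[<] q) (𝓝 B))
    (hd : ∀ x ∈ Ioo p q \ (S : Set ℝ), HasDerivAt F (F' x) x)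
    (hi : IntervalIntegrable F' volume p q) : ∫ x in p..q, F' x = B - A := by
  have heq : ∀ x ∈ Ioo p q, extendFrom (Ioo p q) F x = F x := fun x hx =>
    extendFrom_extends hc x hx
  rw [← eq_lim_at_left_extendFrom_Ioo hpq hA, ← eq_lim_at_right_extendFrom_Ioo hpq hB]
  refine integral_eq_of_hasDerivAt_off_countable_of_le _ _ hpq.le S.countable_toSet
    (continuousOn_Icc_extendFrom_Ioo hc hA hB) (fun x hx => ?_) hi
  exact (hd x hx).congr_of_eventuallyEq
    (Filter.eventuallyEq_of_mem (isOpen_Ioo.mem_nhds hx.1) heq)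

/-- Converse part of the boundary value problem characterisation: if `α_i`, `β_j` are continuous
solutions on `(0,1)` of the system `α_i' = b_i u`, `-β_j' = d_j u` off the finite set `S`, with
`u := Σ a_i α_i + Σ c_j β_j`, boundary conditions `α_i(0+) = 0`, `β_j(1-) = 0`, and `u`
integrable, then `u` solves the integral equation `u(y) = ∫₀¹ u(x) f(x,y) dx` on `(0,1)`. -/
theorem stmt8 (N M : ℕ) (hN : 1 ≤ N) (hM : 1 ≤ M)
    (a b : Fin N → ℝ → ℝ) (c d : Fin M → ℝ → ℝ) (f : ℝ → ℝ → ℝ)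
    (hfu : ∀ x y : ℝ, 0 ≤ x → x < y → y < 1 → f x y = ∑ i, a i y * b i x)
    (hfl : ∀ x y : ℝ, 0 < y → y ≤ x → x ≤ 1 → f x y = ∑ j, c j y * d j x)
    (hC1a : ∀ i, ContinuousOn (a i) (Ioo 0 1))
    (hC1c : ∀ j, ContinuousOn (c j) (Ioo 0 1))
    (Sb : Fin N → Finset ℝ) (Sd : Fin M → Finset ℝ)
    (hC2 : ∀ i, PCOn (b i) (Ico 0 1) (Sb i))
    (hC3 : ∀ j, PCOn (d j) (Ioc 0 1) (Sd j))
    (S : Finset ℝ) (hS : S = Finset.univ.biUnion Sb ∪ Finset.univ.biUnion Sd)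
    (α : Fin N → ℝ → ℝ) (β : Fin M → ℝ → ℝ)
    (hαc : ∀ i, ContinuousOn (α i) (Ioo 0 1)) (hβc : ∀ j, ContinuousOn (β j) (Ioo 0 1))
    (u : ℝ → ℝ)
    (hu_def : ∀ y ∈ Ioo (0 : ℝ) 1, u y = (∑ i, a i y * α i y) + ∑ j, c j y * β j y)
    (hαd : ∀ y ∈ Ioo (0 : ℝ) 1 \ (S : Set ℝ), ∀ i, HasDerivAt (α i) (b i y * u y) y)
    (hβd : ∀ y ∈ Ioo (0 : ℝ) 1 \ (S : Set ℝ), ∀ j, HasDerivAt (β j) (-(d j y * u y)) y)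
    (hα0 : ∀ i, Tendsto (α i) (nhdsWithin 0 (Ioi 0)) (nhds 0))
    (hβ1 : ∀ j, Tendsto (β j) (nhdsWithin 1 (Iio 1)) (nhds 0))
    (huint : IntegrableOn u (Ioo 0 1)) :
    ∀ y ∈ Ioo (0 : ℝ) 1, u y = ∫ x in Ioo (0 : ℝ) 1, u x * f x y := by
  intro y hy
  have hleft : Ioo 0 y ⊆ Ioo (0 : ℝ) 1 := Ioo_subset_Ioo_right hy.2.le
  have hright : Ioo y 1 ⊆ Ioo (0 : ℝ) 1 := Ioo_subset_Ioo_left hy.1.le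
  have hbi : ∀ i, IntervalIntegrable (fun x => b i x * u x) volume 0 y := fun i =>
    (hC2 i).intervalIntegrable_mul hy.1.le (fun x hx => ⟨hx.1, hx.2.trans_lt hy.2⟩)
      (huint.mono_set hleft)
  have hdi : ∀ j, IntervalIntegrable (fun x => d j x * u x) volume y 1 := fun j =>
    (hC3 j).intervalIntegrable_mul hy.2.le (fun x hx => ⟨hy.1.trans_le hx.1, hx.2⟩)
      (huint.mono_set hright)
  have hα : ∀ i, ∫ x in (0 : ℝ)..y, b i x * u x = α i y := fun i => by
    have h := integral_eq_sub_of_tendsto_off_finite hy.1 S ((hαc i).mono hleft) (hα0 i)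
      (((hαc i).continuousAt (isOpen_Ioo.mem_nhds hy)).tendsto.mono_left nhdsWithin_le_nhds)
      (fun x hx => hαd x ⟨hleft hx.1, hx.2⟩ i) (hbi i)
    rw [h, sub_zero]
  have hβ : ∀ j, ∫ x in y..1, d j x * u x = β j y := fun j => by
    have h := integral_eq_sub_of_tendsto_off_finite hy.2 S ((hβc j).mono hright)
      (((hβc j).continuousAt (isOpen_Ioo.mem_nhds hy)).tendsto.mono_left nhdsWithin_le_nhds)
      (hβ1 j) (fun x hx => hβd x ⟨hright hx.1, hx.2⟩ j) (hdi j).neg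
    rw [intervalIntegral.integral_neg] at h
    linarith
  -- Both branches are compared on open intervals; the endpoints are null sets.
  have e1 : EqOn (fun x => ∑ i, a i y * (b i x * u x)) (fun x => u x * f x y) (Ioo 0 y) := by
    intro x hx
    simp only [hfu x y hx.1.le hx.2 hy.2, Finset.mul_sum]
    exact Finset.sum_congr rfl fun i _ => by ring
  have e2 : EqOn (fun x => ∑ j, c j y * (d j x * u x)) (fun x => u x * f x y) (Ioo y 1) := by
    intro x hx
    simp only [hfl x y hy.1 hx.1.le hx.2.le, Finset.mul_sum]
    exact Finset.sum_congr rfl fun i _ => by ring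
  have s1 : IntervalIntegrable (fun x => ∑ i, a i y * (b i x * u x)) volume 0 y :=
    (intervalIntegrable_iff_integrableOn_Ioo_of_le hy.1.le).2 <| integrable_finsetSum _ fun i _ =>
      ((intervalIntegrable_iff_integrableOn_Ioo_of_le hy.1.le).1 (hbi i)).const_mul _
  have s2 : IntervalIntegrable (fun x => ∑ j, c j y * (d j x * u x)) volume y 1 :=
    (intervalIntegrable_iff_integrableOn_Ioo_of_le hy.2.le).2 <| integrable_finsetSum _ fun j _ =>
      ((intervalIntegrable_iff_integrableOn_Ioo_of_le hy.2.le).1 (hdi j)).const_mul _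
  have i1 : ∫ x in (0 : ℝ)..y, u x * f x y = ∑ i, a i y * α i y := by
    rw [intervalIntegral.integral_of_le hy.1.le, integral_Ioc_eq_integral_Ioo,
      ← setIntegral_congr_fun measurableSet_Ioo e1, ← integral_Ioc_eq_integral_Ioo,
      ← intervalIntegral.integral_of_le hy.1.le,
      intervalIntegral.integral_finsetSum fun i _ => (hbi i).const_mul _]
    simp only [intervalIntegral.integral_const_mul, hα]
  have i2 : ∫ x in y..1, u x * f x y = ∑ j, c j y * β j y := by
    rw [intervalIntegral.integral_of_le hy.2.le, integral_Ioc_eq_integral_Ioo,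
      ← setIntegral_congr_fun measurableSet_Ioo e2, ← integral_Ioc_eq_integral_Ioo,
      ← intervalIntegral.integral_of_le hy.2.le,
      intervalIntegral.integral_finsetSum fun j _ => (hdi j).const_mul _]
    simp only [intervalIntegral.integral_const_mul, hβ]
  have k1 : IntervalIntegrable (fun x => u x * f x y) volume 0 y := by
    rw [intervalIntegrable_iff_integrableOn_Ioo_of_le hy.1.le] at s1 ⊢
    exact s1.congr_fun e1 measurableSet_Ioo
  have k2 : IntervalIntegrable (fun x => u x * f x y) volume y 1 := by
    rw [intervalIntegrable_iff_integrableOn_Ioo_of_le hy.2.le] at s2 ⊢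
    exact s2.congr_fun e2 measurableSet_Ioo
  rw [hu_def y hy, ← i1, ← i2, intervalIntegral.integral_add_adjacent_intervals k1 k2,
    intervalIntegral.integral_of_le zero_le_one, integral_Ioc_eq_integral_Ioo]
end

section
/- Let l, r > 0, let p : [0,1] → [0,1] be piecewise continuous and satisfy condition [E1], and suppose F_L = Beta(1,l) and F_R = Beta(1,r). Then the Markov chain X with kernel κ is ergodic: it has a unique invariant probability measure, the n-step laws converge to it in total variation from every starting point, and the invariant measure is absolutely continuous with density π(x) = C x^l ( r/(1−x) + l/x ) exp( −r ∫_{1/2}^x p(t)/(1−t) dt − l ∫_{1/2}^x p(t)/t dt ), 0 < x < 1, where C > 0 is the normalising constant making ∫_0^1 π(x) dx = 1. -/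
/-!
Write `φ(x) = r/(1-x) + l/x`, let `Φ(x) = l log x - r log (1-x)` be a primitive of `φ`, and let `P`
be the primitive of `p φ` vanishing at `1/2` (`phi`, `Phi`, `pot` below). The density of the
statement is `π = C x^l φ e^{-P}`, and `e^Φ = x^l (1-x)^{-r}`.

*Invariance.* A jump from `x` to the left has density `l y^{l-1} x^{-l}` on `(0,x)`, one to the right
has density `r (1-y)^{r-1} (1-x)^{-r}` on `(x,1)`. By Tonelli, the law after one step from `π` has
density (with `C = 1`)
`l y^{l-1} ∫_y^1 p φ e^{-P} + r (1-y)^{r-1} ∫_0^y (1-p) φ e^{Φ-P}`.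
Both integrands are exact derivatives, of `-e^{-P}` and of `e^{Φ-P}`, away from the finitely many
discontinuities of `p`. Condition [E1] makes `e^{-P}` vanish at `1` and `e^{Φ-P}` vanish at `0`, so
the two integrals are `e^{-P(y)}` and `e^{Φ(y)-P(y)}` (`lintegral_flux_left`,
`lintegral_flux_right`), and the sum is `π(y)` (`statDens_invariant`). All these integrals are taken
in `[0,∞]`, so no integrability has to be known beforehand. The same two identities bound the mass
of `π` near `0` and near `1` (`lintegral_statDens_lt_top`), so that `π` can be normalised.

*Ergodicity.* From any point the chain is in `[0,δ] ∪ [1-δ,1]` after one step with probability bounded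
below, and from there [E1] lets it jump across `(δ,1-δ)` with a density bounded below. Hence all
two-step laws dominate one nonzero measure `η` (`exists_two_step_minorant`). Two steps then shrink
the oscillation of every bounded function by the factor `1 - η(ℝ)` (`osc_step`), which yields
convergence in total variation (`tendsto_tvDist_iterLaw`) and uniqueness (`invariant_unique`).
-/
open MeasureTheory Filter Topology Set

/-- The one-step Markov kernel of the chain. -/
noncomputable def mcKernel (FL FR : Measure ℝ) (p : ℝ → ℝ) (x : ℝ) : Measure ℝ :=
  Measure.map (fun w : ℝ × ℝ × ℝ => if w.2.2 < p x then x - x * w.1 else x + (1 - x) * w.2.1)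
    (FL.prod (FR.prod (volume.restrict (Icc (0 : ℝ) 1))))

/-- The `n`-step law of the chain with one-step kernel `κ` started at `x`. -/
noncomputable def iterLaw (κ : ℝ → Measure ℝ) (x : ℝ) : ℕ → Measure ℝ
  | 0 => Measure.dirac x
  | n + 1 => (iterLaw κ x n).bind κ

/-- The total variation distance between two measures. -/
noncomputable def tvDist (μ ν : Measure ℝ) : ℝ :=
  ⨆ B : {B : Set ℝ // MeasurableSet B}, |(μ B.1).toReal - (ν B.1).toReal|

/-- The beta distribution `Beta(a,b)` on `(0,1)`, with density
`x^{a-1}(1-x)^{b-1}/B(a,b)` there. -/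
noncomputable def betaMeasure (a b : ℝ) : Measure ℝ :=
  volume.withDensity fun x =>
    indicator (Ioo (0 : ℝ) 1)
      (fun z => ENNReal.ofReal
        (z ^ (a - 1) * (1 - z) ^ (b - 1) / ∫ u in (0 : ℝ)..1, u ^ (a - 1) * (1 - u) ^ (b - 1))) x

/-- The stationary density of Theorem 2 (up to the normalising constant `C`). -/
noncomputable def statDens (l r C : ℝ) (p : ℝ → ℝ) (x : ℝ) : ℝ :=
  C * x ^ l * (r / (1 - x) + l / x) *
    Real.exp (-(r * ∫ t in (1 / 2 : ℝ)..x, p t / (1 - t)) -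
      l * ∫ t in (1 / 2 : ℝ)..x, p t / t)

/-! ### Uniform ergodicity from a two-step minorization -/

/-- The averaging operator `f ↦ ∫ f dκ(x)` of a transition function, on `[0,∞]`-valued functions. -/
noncomputable def avgOp (κ : ℝ → Measure ℝ) (f : ℝ → ENNReal) (x : ℝ) : ENNReal :=
  ∫⁻ y, f y ∂κ x

lemma measurable_avgOp {κ : ℝ → Measure ℝ} (hκ : Measurable κ) {f : ℝ → ENNReal}
    (hf : Measurable f) : Measurable (avgOp κ f) :=
  (Measure.measurable_lintegral hf).comp hκ

lemma measurable_avgOp_iterate {κ : ℝ → Measure ℝ} (hκ : Measurable κ) {f : ℝ → ENNReal}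
    (hf : Measurable f) (n : ℕ) : Measurable ((avgOp κ)^[n] f) := by
  induction n with
  | zero => simpa using hf
  | succ n ih => rw [Function.iterate_succ_apply']; exact measurable_avgOp hκ ih

lemma avgOp_iterate_le_one {κ : ℝ → Measure ℝ} (hprob : ∀ x, IsProbabilityMeasure (κ x))
    {f : ℝ → ENNReal} (hf : ∀ x, f x ≤ 1) (n : ℕ) (x : ℝ) : (avgOp κ)^[n] f x ≤ 1 := by
  induction n generalizing x with
  | zero => simpa using hf x
  | succ n ih =>
    rw [Function.iterate_succ_apply']
    have := hprob x
    calc avgOp κ ((avgOp κ)^[n] f) x ≤ ∫⁻ _, 1 ∂κ x := lintegral_mono ih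
      _ = 1 := by simp

lemma lintegral_iterLaw {κ : ℝ → Measure ℝ} (hκ : Measurable κ) {f : ℝ → ENNReal}
    (hf : Measurable f) (x : ℝ) (n : ℕ) :
    ∫⁻ y, f y ∂iterLaw κ x n = (avgOp κ)^[n] f x := by
  induction n generalizing f with
  | zero => simp [iterLaw, lintegral_dirac' _ hf]
  | succ n ih =>
    rw [iterLaw, Measure.lintegral_bind hκ.aemeasurable hf.aemeasurable,
      Function.iterate_succ_apply]
    exact ih (measurable_avgOp hκ hf)

lemma lintegral_avgOp_iterate_of_invariant {κ : ℝ → Measure ℝ} (hκ : Measurable κ)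
    {ν : Measure ℝ} (hν : ν.bind κ = ν) {f : ℝ → ENNReal} (hf : Measurable f) (n : ℕ) :
    ∫⁻ x, (avgOp κ)^[n] f x ∂ν = ∫⁻ x, f x ∂ν := by
  induction n generalizing f with
  | zero => rfl
  | succ n ih =>
    rw [Function.iterate_succ_apply, ih (measurable_avgOp hκ hf)]
    conv_rhs => rw [← hν, Measure.lintegral_bind hκ.aemeasurable hf.aemeasurable]
    rfl

lemma ae_mem_of_compl_null {ν : Measure ℝ} (h : ν (Icc (0 : ℝ) 1)ᶜ = 0) :
    ∀ᵐ x ∂ν, x ∈ Icc (0 : ℝ) 1 := h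

/-- If the two-step law dominates a fixed measure `η` from every starting point, two steps shrink
the oscillation of a function by the factor `1 - η(ℝ)`: the parts of the two-step laws equal to
`η` contribute the same amount, and only the remaining mass sees the oscillation. -/
lemma osc_step {κ : ℝ → Measure ℝ} (hκ : Measurable κ)
    (hprob : ∀ x, IsProbabilityMeasure (κ x))
    (hsupp : ∀ x ∈ Icc (0 : ℝ) 1, κ x (Icc (0 : ℝ) 1)ᶜ = 0)
    {η : Measure ℝ} [IsFiniteMeasure η] (hη : ∀ x ∈ Icc (0 : ℝ) 1, η ≤ (κ x).bind κ)
    {f : ℝ → ENNReal} (hf : Measurable f) {a s : ENNReal}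
    (h : ∀ x ∈ Icc (0 : ℝ) 1, a ≤ f x ∧ f x ≤ a + s) :
    ∃ a', ∀ x ∈ Icc (0 : ℝ) 1, a' ≤ avgOp κ (avgOp κ f) x ∧
      avgOp κ (avgOp κ f) x ≤ a' + (1 - η univ) * s := by
  refine ⟨∫⁻ y, f y ∂η + a * (1 - η univ), fun x hx => ?_⟩
  set M := (κ x).bind κ with hM
  have hMp : M univ = 1 := by
    rw [hM, Measure.bind_apply MeasurableSet.univ hκ.aemeasurable]
    have := hprob x
    simp
  have : IsFiniteMeasure M := ⟨by rw [hMp]; exact ENNReal.one_lt_top⟩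
  have hMs : M (Icc (0 : ℝ) 1)ᶜ = 0 := by
    rw [hM, Measure.bind_apply measurableSet_Icc.compl hκ.aemeasurable]
    refine lintegral_eq_zero_of_ae_eq_zero ?_
    filter_upwards [ae_mem_of_compl_null (hsupp x hx)] with y hy using hsupp y hy
  have hMae : ∀ᵐ y ∂(M - η), y ∈ Icc (0 : ℝ) 1 :=
    Measure.absolutelyContinuous_of_le Measure.sub_le (ae_mem_of_compl_null hMs)
  have hfM : avgOp κ (avgOp κ f) x = ∫⁻ y, f y ∂η + ∫⁻ y, f y ∂(M - η) := by
    calc avgOp κ (avgOp κ f) x = ∫⁻ y, f y ∂M := by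
          rw [hM, Measure.lintegral_bind hκ.aemeasurable hf.aemeasurable]; rfl
      _ = ∫⁻ y, f y ∂((M - η) + η) := by rw [Measure.sub_add_cancel_of_le (hη x hx)]
      _ = _ := by rw [lintegral_add_measure, add_comm]
  have hmass : (M - η) univ = 1 - η univ := by
    rw [Measure.sub_apply MeasurableSet.univ (hη x hx), hMp]
  rw [hfM]
  constructor
  · gcongr
    calc a * (1 - η univ) = ∫⁻ _, a ∂(M - η) := by rw [lintegral_const, hmass]
      _ ≤ _ := lintegral_mono_ae (hMae.mono fun y hy => (h y hy).1)
  · rw [add_assoc]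
    gcongr
    calc ∫⁻ y, f y ∂(M - η) ≤ ∫⁻ _, (a + s) ∂(M - η) :=
          lintegral_mono_ae (hMae.mono fun y hy => (h y hy).2)
      _ = _ := by rw [lintegral_const, hmass]; ring

lemma osc_iterate {κ : ℝ → Measure ℝ} (hκ : Measurable κ)
    (hprob : ∀ x, IsProbabilityMeasure (κ x))
    (hsupp : ∀ x ∈ Icc (0 : ℝ) 1, κ x (Icc (0 : ℝ) 1)ᶜ = 0)
    {η : Measure ℝ} [IsFiniteMeasure η] (hη : ∀ x ∈ Icc (0 : ℝ) 1, η ≤ (κ x).bind κ)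
    {f : ℝ → ENNReal} (hf : Measurable f) (hf1 : ∀ x, f x ≤ 1) (k : ℕ) :
    ∃ a, ∀ x ∈ Icc (0 : ℝ) 1, a ≤ (avgOp κ)^[2 * k] f x ∧
      (avgOp κ)^[2 * k] f x ≤ a + (1 - η univ) ^ k := by
  induction k with
  | zero => exact ⟨0, fun x _ => by simpa using hf1 x⟩
  | succ k ih =>
    obtain ⟨a, ha⟩ := ih
    obtain ⟨a', ha'⟩ := osc_step hκ hprob hsupp hη (measurable_avgOp_iterate hκ hf (2 * k)) ha
    refine ⟨a', fun x hx => ?_⟩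
    have e : (avgOp κ)^[2 * (k + 1)] f = avgOp κ (avgOp κ ((avgOp κ)^[2 * k] f)) := by
      rw [show 2 * (k + 1) = 2 * k + 1 + 1 by ring, Function.iterate_succ_apply',
        Function.iterate_succ_apply']
    rw [e, pow_succ']
    exact ha' x hx

lemma abs_toReal_sub_le {u v a s : ENNReal} (hs : s ≠ ⊤) (hu1 : u ≤ 1) (hu : a ≤ u)
    (hu' : u ≤ a + s) (hv : a ≤ v) (hv' : v ≤ a + s) : |u.toReal - v.toReal| ≤ s.toReal := by
  have ha : a ≠ ⊤ := ne_top_of_le_ne_top ENNReal.one_ne_top (hu.trans hu1)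
  have has : a + s ≠ ⊤ := ENNReal.add_ne_top.2 ⟨ha, hs⟩
  have e : (a + s).toReal = a.toReal + s.toReal := ENNReal.toReal_add ha hs
  have h1 := ENNReal.toReal_mono (ne_top_of_le_ne_top has hu') hu
  have h2 := ENNReal.toReal_mono has hu'
  have h3 := ENNReal.toReal_mono (ne_top_of_le_ne_top has hv') hv
  have h4 := ENNReal.toReal_mono has hv'
  rw [abs_le]; constructor <;> linarith

lemma lintegral_mem_bounds {ν : Measure ℝ} [IsProbabilityMeasure ν]
    (hν : ν (Icc (0 : ℝ) 1) = 1) {f : ℝ → ENNReal} {a b : ENNReal}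
    (h : ∀ x ∈ Icc (0 : ℝ) 1, a ≤ f x ∧ f x ≤ b) :
    a ≤ ∫⁻ x, f x ∂ν ∧ ∫⁻ x, f x ∂ν ≤ b := by
  have hae : ∀ᵐ x ∂ν, x ∈ Icc (0 : ℝ) 1 :=
    ae_mem_of_compl_null ((prob_compl_eq_zero_iff measurableSet_Icc).2 hν)
  constructor
  · calc a = ∫⁻ _, a ∂ν := by simp
      _ ≤ _ := lintegral_mono_ae (hae.mono fun x hx => (h x hx).1)
  · calc _ ≤ ∫⁻ _, b ∂ν := lintegral_mono_ae (hae.mono fun x hx => (h x hx).2)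
      _ = b := by simp

/-- Geometric convergence of the `n`-step laws to an invariant law under the two-step
minorization. -/
lemma tvDist_iterLaw_le {κ : ℝ → Measure ℝ} (hκ : Measurable κ)
    (hprob : ∀ x, IsProbabilityMeasure (κ x))
    (hsupp : ∀ x ∈ Icc (0 : ℝ) 1, κ x (Icc (0 : ℝ) 1)ᶜ = 0)
    {η : Measure ℝ} [IsFiniteMeasure η] (hη : ∀ x ∈ Icc (0 : ℝ) 1, η ≤ (κ x).bind κ)
    {μ : Measure ℝ} [IsProbabilityMeasure μ] (hμ : μ (Icc (0 : ℝ) 1) = 1)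
    (hinv : μ.bind κ = μ) {x : ℝ} (hx : x ∈ Icc (0 : ℝ) 1) (n : ℕ) :
    tvDist (iterLaw κ x n) μ ≤ ((1 - η univ) ^ (n / 2)).toReal := by
  have hs : (1 - η univ) ^ (n / 2) ≠ ⊤ :=
    ENNReal.pow_ne_top (ne_top_of_le_ne_top ENNReal.one_ne_top tsub_le_self)
  refine ciSup_le fun B => ?_
  have hB := B.2
  have hf : Measurable (B.1.indicator (fun _ => (1 : ENNReal))) := measurable_const.indicator hB
  have hf1 : ∀ x, B.1.indicator (fun _ => (1 : ENNReal)) x ≤ 1 :=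
    fun x => indicator_le_self' (fun _ _ => zero_le) x
  have hsplit : (avgOp κ)^[n] (B.1.indicator fun _ => 1) =
      (avgOp κ)^[2 * (n / 2)] ((avgOp κ)^[n % 2] (B.1.indicator fun _ => 1)) := by
    rw [← Function.iterate_add_apply, Nat.div_add_mod]
  obtain ⟨a, ha⟩ := osc_iterate hκ hprob hsupp hη (measurable_avgOp_iterate hκ hf (n % 2))
    (avgOp_iterate_le_one hprob hf1 _) (n / 2)
  rw [← hsplit] at ha
  have e1 : iterLaw κ x n B.1 = (avgOp κ)^[n] (B.1.indicator fun _ => 1) x := by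
    rw [← lintegral_iterLaw hκ hf, lintegral_indicator_const hB, one_mul]
  have e2 : μ B.1 = ∫⁻ y, (avgOp κ)^[n] (B.1.indicator fun _ => 1) y ∂μ := by
    rw [lintegral_avgOp_iterate_of_invariant hκ hinv hf, lintegral_indicator_const hB, one_mul]
  have hb := lintegral_mem_bounds hμ ha
  rw [e1, e2]
  exact abs_toReal_sub_le hs (avgOp_iterate_le_one hprob hf1 _ _) (ha x hx).1 (ha x hx).2 hb.1 hb.2

lemma tendsto_minorization_pow {c : ENNReal} (hc : c ≠ 0) :
    Tendsto (fun n : ℕ => ((1 - c) ^ (n / 2)).toReal) atTop (nhds 0) := by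
  have h1 : (1 - c).toReal < 1 := by
    have : 1 - c < 1 := ENNReal.sub_lt_self ENNReal.one_ne_top one_ne_zero hc
    simpa using (ENNReal.toReal_lt_toReal this.ne_top ENNReal.one_ne_top).2 this
  simp only [ENNReal.toReal_pow]
  exact (tendsto_pow_atTop_nhds_zero_of_lt_one ENNReal.toReal_nonneg h1).comp
    (Nat.tendsto_div_const_atTop two_ne_zero)

lemma tendsto_tvDist_iterLaw {κ : ℝ → Measure ℝ} (hκ : Measurable κ)
    (hprob : ∀ x, IsProbabilityMeasure (κ x))
    (hsupp : ∀ x ∈ Icc (0 : ℝ) 1, κ x (Icc (0 : ℝ) 1)ᶜ = 0)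
    {η : Measure ℝ} [IsFiniteMeasure η] (hη : ∀ x ∈ Icc (0 : ℝ) 1, η ≤ (κ x).bind κ)
    (hη0 : η univ ≠ 0)
    {μ : Measure ℝ} [IsProbabilityMeasure μ] (hμ : μ (Icc (0 : ℝ) 1) = 1)
    (hinv : μ.bind κ = μ) {x : ℝ} (hx : x ∈ Icc (0 : ℝ) 1) :
    Tendsto (fun n => tvDist (iterLaw κ x n) μ) atTop (nhds 0) :=
  squeeze_zero (fun _ => Real.iSup_nonneg fun _ => abs_nonneg _)
    (tvDist_iterLaw_le hκ hprob hsupp hη hμ hinv hx) (tendsto_minorization_pow hη0)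

lemma invariant_unique {κ : ℝ → Measure ℝ} (hκ : Measurable κ)
    (hprob : ∀ x, IsProbabilityMeasure (κ x))
    (hsupp : ∀ x ∈ Icc (0 : ℝ) 1, κ x (Icc (0 : ℝ) 1)ᶜ = 0)
    {η : Measure ℝ} [IsFiniteMeasure η] (hη : ∀ x ∈ Icc (0 : ℝ) 1, η ≤ (κ x).bind κ)
    (hη0 : η univ ≠ 0)
    {μ ν : Measure ℝ} [IsProbabilityMeasure μ] (hμ : μ (Icc (0 : ℝ) 1) = 1)
    (hinv : μ.bind κ = μ) [IsProbabilityMeasure ν] (hν : ν (Icc (0 : ℝ) 1) = 1)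
    (hinvν : ν.bind κ = ν) : ν = μ := by
  ext B hB
  have hf : Measurable (B.indicator (fun _ => (1 : ENNReal))) := measurable_const.indicator hB
  have hf1 : ∀ x, B.indicator (fun _ => (1 : ENNReal)) x ≤ 1 :=
    fun x => indicator_le_self' (fun _ _ => zero_le) x
  have key : ∀ n : ℕ, |(ν B).toReal - (μ B).toReal| ≤ ((1 - η univ) ^ (n / 2)).toReal := by
    intro n
    have hs : (1 - η univ) ^ (n / 2) ≠ ⊤ :=
      ENNReal.pow_ne_top (ne_top_of_le_ne_top ENNReal.one_ne_top tsub_le_self)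
    obtain ⟨a, ha⟩ := osc_iterate hκ hprob hsupp hη hf hf1 (n / 2)
    have e : ∀ ρ : Measure ℝ, ρ.bind κ = ρ →
        ρ B = ∫⁻ y, (avgOp κ)^[2 * (n / 2)] (B.indicator fun _ => 1) y ∂ρ := fun ρ hρ => by
      rw [lintegral_avgOp_iterate_of_invariant hκ hρ hf, lintegral_indicator_const hB, one_mul]
    have h1 := lintegral_mem_bounds hμ ha
    have h2 := lintegral_mem_bounds hν ha
    rw [← e μ hinv] at h1
    rw [← e ν hinvν] at h2
    exact abs_toReal_sub_le hs prob_le_one h2.1 h2.2 h1.1 h1.2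
  have h0 : |(ν B).toReal - (μ B).toReal| ≤ 0 :=
    ge_of_tendsto' (tendsto_minorization_pow hη0) key
  have := sub_eq_zero.1 (abs_nonpos_iff.1 h0)
  exact (ENNReal.toReal_eq_toReal_iff' (measure_ne_top _ _) (measure_ne_top _ _)).1 this

/-! ### The fundamental theorem of calculus on an open interval, for nonnegative derivatives -/

/-- Only one-sided limits of `F` at the end points are assumed, and no integrability of `g` near
them: the integral over `(a,b)` is the limit of those over compact subintervals. -/
lemma lintegral_Ioo_of_hasDerivAt {F g : ℝ → ℝ} {a b A B : ℝ} {S : Set ℝ} (hab : a < b)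
    (hS : S.Countable) (hF : ContinuousOn F (Ioo a b))
    (hd : ∀ x ∈ Ioo a b \ S, HasDerivAt F (g x) x)
    (hgm : AEMeasurable g (volume.restrict (Ioo a b)))
    (hg0 : ∀ x ∈ Ioo a b, 0 ≤ g x)
    (hgint : ∀ c d, a < c → c ≤ d → d < b → IntervalIntegrable g volume c d)
    (hA : Tendsto F (𝓝[>] a) (𝓝 A)) (hB : Tendsto F (𝓝[<] b) (𝓝 B)) :
    ∫⁻ x in Ioo a b, ENNReal.ofReal (g x) = ENNReal.ofReal (B - A) := by
  set m := (a + b) / 2 with hm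
  obtain ⟨u, -, hu, hul⟩ := exists_seq_strictAnti_tendsto' (show a < m by linarith)
  obtain ⟨v, -, hv, hvl⟩ := exists_seq_strictMono_tendsto' (show m < b by linarith)
  have hcov : AECover (volume.restrict (Ioo a b)) atTop (fun n => Icc (u n) (v n)) :=
    aecover_Ioo_of_Icc hul hvl
  refine hcov.lintegral_eq_of_tendsto _ hgm.ennreal_ofReal ?_
  have e : ∀ n, ∫⁻ x in Icc (u n) (v n), ENNReal.ofReal (g x) ∂(volume.restrict (Ioo a b)) =
      ENNReal.ofReal (F (v n) - F (u n)) := by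
    intro n
    have h1 := (hu n).1
    have h2 := (hu n).2
    have h3 := (hv n).1
    have h4 := (hv n).2
    have huv : u n ≤ v n := by linarith
    have hsub : Icc (u n) (v n) ⊆ Ioo a b := fun x hx => ⟨h1.trans_le hx.1, hx.2.trans_lt h4⟩
    rw [Measure.restrict_restrict measurableSet_Icc, inter_eq_left.2 hsub]
    have hgi := hgint _ _ h1 huv h4
    have := integral_eq_of_hasDerivAt_off_countable F g hS
      (a := u n) (b := v n) (by rw [uIcc_of_le huv]; exact hF.mono hsub)
      (fun x hx => hd x ⟨hsub ⟨?_, ?_⟩, hx.2⟩) hgi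
    · rw [← this, intervalIntegral.integral_of_le huv, ← integral_Icc_eq_integral_Ioc,
        ofReal_integral_eq_lintegral_ofReal]
      · exact (intervalIntegrable_iff_integrableOn_Icc_of_le huv).1 hgi
      · exact (ae_restrict_mem measurableSet_Icc).mono fun x hx => hg0 x (hsub hx)
    · have := hx.1.1; rw [min_eq_left huv] at this; exact this.le
    · have := hx.1.2; rw [max_eq_right huv] at this; exact this.le
  simp_rw [e]
  refine ENNReal.tendsto_ofReal (Tendsto.sub (hB.comp ?_) (hA.comp ?_))
  · exact tendsto_nhdsWithin_iff.2 ⟨hvl, Eventually.of_forall fun n => (hv n).2⟩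
  · exact tendsto_nhdsWithin_iff.2 ⟨hul, Eventually.of_forall fun n => (hu n).1⟩

/-! ### The beta laws -/

lemma betaMeasure_one_eq {l : ℝ} (hl : 0 < l) : betaMeasure 1 l =
    volume.withDensity ((Ioo (0 : ℝ) 1).indicator
      fun z => ENNReal.ofReal (l * (1 - z) ^ (l - 1))) := by
  have h : ∫ u in (0 : ℝ)..1, u ^ ((1 : ℝ) - 1) * (1 - u) ^ (l - 1) = 1 / l := by
    have := intervalIntegral.integral_comp_sub_left (a := 0) (b := 1)
      (fun u : ℝ => u ^ (l - 1)) 1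
    simp only [sub_self, Real.rpow_zero, one_mul]
    rw [this]
    simp only [sub_self, sub_zero]
    rw [integral_rpow (Or.inl (by linarith))]
    simp [Real.zero_rpow hl.ne']
  unfold betaMeasure
  rw [h]
  congr 1
  ext x
  congr 1
  ext z
  simp [mul_comm]

lemma measurable_betaDensity (l : ℝ) : Measurable ((Ioo (0 : ℝ) 1).indicator
      fun z => ENNReal.ofReal (l * (1 - z) ^ (l - 1))) :=
  Measurable.indicator (by fun_prop) measurableSet_Ioo

lemma lintegral_betaMeasure {l : ℝ} (hl : 0 < l) {f : ℝ → ENNReal} (hf : Measurable f) :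
    ∫⁻ z, f z ∂(betaMeasure 1 l) =
      ∫⁻ z in Ioo (0 : ℝ) 1, ENNReal.ofReal (l * (1 - z) ^ (l - 1)) * f z := by
  rw [betaMeasure_one_eq hl,
    lintegral_withDensity_eq_lintegral_mul _ (measurable_betaDensity l) hf,
    ← lintegral_indicator measurableSet_Ioo]
  congr 1
  ext z
  by_cases hz : z ∈ Ioo (0 : ℝ) 1 <;> simp [hz]

lemma isProbabilityMeasure_betaMeasure {l : ℝ} (hl : 0 < l) :
    IsProbabilityMeasure (betaMeasure 1 l) := by
  constructor
  have h := lintegral_betaMeasure hl (f := fun _ => 1) measurable_const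
  simp only [lintegral_const, one_mul, mul_one] at h
  rw [h]
  have hc : Continuous fun z : ℝ => -(1 - z) ^ l :=
    (Continuous.rpow_const (by fun_prop) fun _ => Or.inr hl.le).neg
  rw [lintegral_Ioo_of_hasDerivAt (F := fun z => -(1 - z) ^ l) (A := -1) (B := 0) (S := ∅)
    one_pos countable_empty hc.continuousOn]
  · simp
  · intro x hx
    have h1 : (1 - x) ≠ 0 := by have := hx.1.2; linarith
    have := (((hasDerivAt_id x).const_sub 1).rpow_const (p := l) (Or.inl h1)).neg
    exact this.congr_deriv (by simp)
  · fun_prop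
  · intro x hx
    have : 0 < 1 - x := by linarith [hx.2]
    positivity
  · intro c d _ hcd hd
    refine ContinuousOn.intervalIntegrable ?_
    rw [uIcc_of_le hcd]
    refine continuousOn_const.mul (ContinuousOn.rpow_const (by fun_prop) fun x hx => Or.inl ?_)
    have := hx.2
    linarith
  · have := (hc.tendsto 0).mono_left (nhdsWithin_le_nhds (s := Ioi 0))
    simpa using this
  · have := (hc.tendsto 1).mono_left (nhdsWithin_le_nhds (s := Iio 1))
    simpa [Real.zero_rpow hl.ne'] using this

/-- The law of `x - xL` for `L ∼ Beta(1,l)` has density `l y^{l-1} x^{-l}` on `(0,x)`. -/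
lemma lintegral_left_jump {l x : ℝ} (hl : 0 < l) (hx : 0 < x) {f : ℝ → ENNReal}
    (hf : Measurable f) :
    ∫⁻ z, f (x - x * z) ∂(betaMeasure 1 l) =
      ∫⁻ y in Ioo 0 x, ENNReal.ofReal (l * y ^ (l - 1) * x ^ (-l)) * f y := by
  rw [lintegral_betaMeasure hl (by fun_prop)]
  have him : (fun z : ℝ => x - x * z) '' Ioo 0 1 = Ioo 0 x := by
    ext y
    constructor
    · rintro ⟨z, ⟨h1, h2⟩, rfl⟩
      constructor <;> nlinarith
    · rintro ⟨h1, h2⟩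
      refine ⟨1 - y / x, ⟨?_, ?_⟩, ?_⟩
      · have := (div_lt_one hx).2 h2; linarith
      · have := div_pos h1 hx; linarith
      · field_simp; ring
  rw [← him, lintegral_image_eq_lintegral_abs_deriv_mul (f' := fun _ => -x) measurableSet_Ioo]
  · refine setLIntegral_congr_fun measurableSet_Ioo fun z hz => ?_
    have hz1 : 0 < 1 - z := by linarith [hz.2]
    rw [← mul_assoc, ← ENNReal.ofReal_mul (abs_nonneg _)]
    congr 2
    rw [abs_neg, abs_of_pos hx, show x - x * z = x * (1 - z) by ring,
      Real.mul_rpow hx.le hz1.le, Real.rpow_sub_one hx.ne', Real.rpow_neg hx.le]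
    have : x ^ l ≠ 0 := (Real.rpow_pos_of_pos hx l).ne'
    field_simp
  · intro z _
    have := ((hasDerivAt_id z).const_mul x).const_sub x
    simpa using this.hasDerivWithinAt
  · intro z _ z' _ h
    have : x * z = x * z' := by dsimp only at h; linarith
    exact mul_left_cancel₀ hx.ne' this

/-- The law of `x + (1-x)R` for `R ∼ Beta(1,r)` has density `r (1-y)^{r-1} (1-x)^{-r}` on
`(x,1)`. -/
lemma lintegral_right_jump {r x : ℝ} (hr : 0 < r) (hx : x < 1) {f : ℝ → ENNReal}
    (hf : Measurable f) :
    ∫⁻ z, f (x + (1 - x) * z) ∂(betaMeasure 1 r) =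
      ∫⁻ y in Ioo x 1, ENNReal.ofReal (r * (1 - y) ^ (r - 1) * (1 - x) ^ (-r)) * f y := by
  rw [lintegral_betaMeasure hr (by fun_prop)]
  have hx' : 0 < 1 - x := by linarith
  have him : (fun z : ℝ => x + (1 - x) * z) '' Ioo 0 1 = Ioo x 1 := by
    ext y
    constructor
    · rintro ⟨z, ⟨h1, h2⟩, rfl⟩
      constructor <;> nlinarith
    · rintro ⟨h1, h2⟩
      refine ⟨(y - x) / (1 - x), ⟨?_, ?_⟩, ?_⟩
      · exact div_pos (by linarith) hx'
      · rw [div_lt_one hx']; linarith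
      · field_simp; ring
  rw [← him, lintegral_image_eq_lintegral_abs_deriv_mul (f' := fun _ => 1 - x) measurableSet_Ioo]
  · refine setLIntegral_congr_fun measurableSet_Ioo fun z hz => ?_
    have hz1 : 0 < 1 - z := by linarith [hz.2]
    rw [← mul_assoc, ← ENNReal.ofReal_mul (abs_nonneg _)]
    congr 2
    rw [abs_of_pos hx', show 1 - (x + (1 - x) * z) = (1 - x) * (1 - z) by ring,
      Real.mul_rpow hx'.le hz1.le, Real.rpow_sub_one hx'.ne', Real.rpow_neg hx'.le]
    have : (1 - x) ^ r ≠ 0 := (Real.rpow_pos_of_pos hx' r).ne'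
    field_simp
  · intro z _
    have := ((hasDerivAt_id z).const_mul (1 - x)).const_add x
    simpa using this.hasDerivWithinAt
  · intro z _ z' _ h
    have : (1 - x) * z = (1 - x) * z' := by dsimp only at h; linarith
    exact mul_left_cancel₀ hx'.ne' this

/-! ### The one-step kernel -/

lemma measurable_mcStep {p : ℝ → ℝ} (hpm : Measurable p) :
    Measurable (fun v : ℝ × ℝ × ℝ × ℝ => if v.2.2.2 < p v.1 then v.1 - v.1 * v.2.1
      else v.1 + (1 - v.1) * v.2.2.1) := by
  refine Measurable.ite (measurableSet_lt ?_ ?_) ?_ ?_ <;> fun_prop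

lemma measurable_mcStep_apply {p : ℝ → ℝ} (hpm : Measurable p) (x : ℝ) :
    Measurable (fun w : ℝ × ℝ × ℝ => if w.2.2 < p x then x - x * w.1 else x + (1 - x) * w.2.1) :=
  (measurable_mcStep hpm).comp (measurable_prodMk_left (x := x))

lemma measurable_mcKernel (FL FR : Measure ℝ) [IsProbabilityMeasure FL] [IsProbabilityMeasure FR]
    {p : ℝ → ℝ} (hpm : Measurable p) : Measurable (mcKernel FL FR p) := by
  refine Measure.measurable_of_measurable_coe _ fun B hB => ?_
  have hm := measurable_mcStep hpm
  have e : ∀ x, mcKernel FL FR p x B =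
      (FL.prod (FR.prod (volume.restrict (Icc (0 : ℝ) 1))))
        (Prod.mk x ⁻¹' ((fun v : ℝ × ℝ × ℝ × ℝ => if v.2.2.2 < p v.1 then v.1 - v.1 * v.2.1
      else v.1 + (1 - v.1) * v.2.2.1) ⁻¹' B)) := fun x => by
    rw [mcKernel, Measure.map_apply (measurable_mcStep_apply hpm x) hB]
    rfl
  simp_rw [e]
  exact measurable_measure_prodMk_left (hm hB)

instance isProbabilityMeasure_unit :
    IsProbabilityMeasure (volume.restrict (Icc (0 : ℝ) 1)) := ⟨by simp⟩

lemma isProbabilityMeasure_mcKernel (FL FR : Measure ℝ) [IsProbabilityMeasure FL]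
    [IsProbabilityMeasure FR] {p : ℝ → ℝ} (hpm : Measurable p) (x : ℝ) :
    IsProbabilityMeasure (mcKernel FL FR p x) :=
  Measure.isProbabilityMeasure_map
    (measurable_mcStep_apply hpm x).aemeasurable

lemma lintegral_mcKernel (FL FR : Measure ℝ) [IsProbabilityMeasure FL] [IsProbabilityMeasure FR]
    {p : ℝ → ℝ} (hpm : Measurable p) {x : ℝ} (hx : p x ∈ Icc (0 : ℝ) 1) {f : ℝ → ENNReal}
    (hf : Measurable f) :
    ∫⁻ y, f y ∂mcKernel FL FR p x = ENNReal.ofReal (p x) * ∫⁻ z, f (x - x * z) ∂FL +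
      ENNReal.ofReal (1 - p x) * ∫⁻ z, f (x + (1 - x) * z) ∂FR := by
  have hm := measurable_mcStep_apply hpm x
  have hfm : Measurable fun w : ℝ × ℝ × ℝ =>
      f (if w.2.2 < p x then x - x * w.1 else x + (1 - x) * w.2.1) := hf.comp hm
  rw [mcKernel, lintegral_map hf hm, lintegral_prod _ hfm.aemeasurable]
  dsimp only
  have inner : ∀ a b : ℝ, ∫⁻ u in Icc (0 : ℝ) 1,
      f (if u < p x then x - x * a else x + (1 - x) * b) =
      ENNReal.ofReal (p x) * f (x - x * a) + ENNReal.ofReal (1 - p x) * f (x + (1 - x) * b) := by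
    intro a b
    have e : (fun u => f (if u < p x then x - x * a else x + (1 - x) * b)) =
        fun u => (Iio (p x)).indicator (fun _ => f (x - x * a)) u +
          (Ici (p x)).indicator (fun _ => f (x + (1 - x) * b)) u := by
      ext u
      by_cases hu : u < p x
      · simp [hu]
      · simp [hu, not_lt.1 hu]
    rw [e, lintegral_add_left (measurable_const.indicator measurableSet_Iio),
      lintegral_indicator_const measurableSet_Iio, lintegral_indicator_const measurableSet_Ici,
      Measure.restrict_apply measurableSet_Iio, Measure.restrict_apply measurableSet_Ici]
    have e1 : Iio (p x) ∩ Icc 0 1 = Ico 0 (p x) := by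
      ext u; simp only [mem_inter_iff, mem_Iio, mem_Icc, mem_Ico]
      exact ⟨fun h => ⟨h.2.1, h.1⟩, fun h => ⟨h.2, h.1, h.2.le.trans hx.2⟩⟩
    have e2 : Ici (p x) ∩ Icc 0 1 = Icc (p x) 1 := by
      ext u; simp only [mem_inter_iff, mem_Ici, mem_Icc]
      exact ⟨fun h => ⟨h.1, h.2.2⟩, fun h => ⟨h.1, hx.1.trans h.1, h.2⟩⟩
    rw [e1, e2, Real.volume_Ico, Real.volume_Icc, sub_zero, mul_comm, mul_comm (f _)]
  have hfl : Measurable fun a => f (x - x * a) := by fun_prop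
  have hfr : Measurable fun a => f (x + (1 - x) * a) := by fun_prop
  have mid : ∀ a : ℝ, ∫⁻ w, f (if w.2 < p x then x - x * a else x + (1 - x) * w.1)
      ∂(FR.prod (volume.restrict (Icc (0 : ℝ) 1))) =
      ENNReal.ofReal (p x) * f (x - x * a) +
        ENNReal.ofReal (1 - p x) * ∫⁻ b, f (x + (1 - x) * b) ∂FR := by
    intro a
    have hfa : Measurable fun w : ℝ × ℝ =>
        f (if w.2 < p x then x - x * a else x + (1 - x) * w.1) :=
      hfm.comp (measurable_prodMk_left (x := a))
    rw [lintegral_prod _ hfa.aemeasurable]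
    simp_rw [inner]
    rw [lintegral_add_left measurable_const, lintegral_const_mul _ hfr]
    simp
  simp_rw [mid]
  rw [lintegral_add_right _ measurable_const, lintegral_const_mul _ hfl]
  simp

lemma mcKernel_compl_Icc {l r : ℝ} (hl : 0 < l) (hr : 0 < r) {p : ℝ → ℝ} (hpm : Measurable p)
    (hp01 : ∀ x ∈ Icc (0 : ℝ) 1, p x ∈ Icc (0 : ℝ) 1) {x : ℝ} (hx : x ∈ Icc (0 : ℝ) 1) :
    mcKernel (betaMeasure 1 l) (betaMeasure 1 r) p x (Icc (0 : ℝ) 1)ᶜ = 0 := by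
  have := isProbabilityMeasure_betaMeasure hl
  have := isProbabilityMeasure_betaMeasure hr
  have hm : Measurable ((Icc (0 : ℝ) 1)ᶜ.indicator fun _ => (1 : ENNReal)) :=
    measurable_const.indicator measurableSet_Icc.compl
  rw [← one_mul (mcKernel _ _ _ _ _), ← lintegral_indicator_const measurableSet_Icc.compl,
    lintegral_mcKernel _ _ hpm (hp01 x hx) hm, lintegral_betaMeasure hl (by fun_prop),
    lintegral_betaMeasure hr (by fun_prop)]
  obtain ⟨h0, h1⟩ := hx
  have e1 : ∀ z ∈ Ioo (0 : ℝ) 1, x - x * z ∈ Icc (0 : ℝ) 1 := fun z ⟨hz0, hz1⟩ => by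
    constructor <;> nlinarith
  have e2 : ∀ z ∈ Ioo (0 : ℝ) 1, x + (1 - x) * z ∈ Icc (0 : ℝ) 1 := fun z ⟨hz0, hz1⟩ => by
    constructor <;> nlinarith
  have i1 : ∫⁻ z in Ioo (0 : ℝ) 1, ENNReal.ofReal (l * (1 - z) ^ (l - 1)) *
      (Icc (0 : ℝ) 1)ᶜ.indicator (fun _ => (1 : ENNReal)) (x - x * z) = 0 :=
    setLIntegral_eq_zero measurableSet_Ioo fun z hz => by
      simp [e1 z hz]
  have i2 : ∫⁻ z in Ioo (0 : ℝ) 1, ENNReal.ofReal (r * (1 - z) ^ (r - 1)) *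
      (Icc (0 : ℝ) 1)ᶜ.indicator (fun _ => (1 : ENNReal)) (x + (1 - x) * z) = 0 :=
    setLIntegral_eq_zero measurableSet_Ioo fun z hz => by
      simp [e2 z hz]
  rw [i1, i2, mul_zero, mul_zero, add_zero]

/-! ### Minorization -/

/-- A jump to the left has a density bounded below on every interval `(a,b)` with
`0 < a < b ≤ x`; `a^l` is a lower bound for `y^{l-1} x^{-l}` there since `y < 1` and `x ≤ 1`. -/
lemma mcKernel_ge_left {l r : ℝ} (hl : 0 < l) (hr : 0 < r) {p : ℝ → ℝ} (hpm : Measurable p)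
    {x a b e : ℝ} (hp : p x ∈ Icc (0 : ℝ) 1) (ha : 0 < a) (hab : a < b) (hbx : b ≤ x)
    (hx : x ≤ 1) (he : e ≤ p x) {B : Set ℝ} (hB : MeasurableSet B) :
    ENNReal.ofReal e * ENNReal.ofReal (l * a ^ l) * volume (B ∩ Ioo a b) ≤
      mcKernel (betaMeasure 1 l) (betaMeasure 1 r) p x B := by
  have := isProbabilityMeasure_betaMeasure hl
  have := isProbabilityMeasure_betaMeasure hr
  have hm : Measurable (B.indicator fun _ => (1 : ENNReal)) := measurable_const.indicator hB
  have hx0 : 0 < x := by linarith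
  rw [← one_mul (mcKernel _ _ _ _ _), ← lintegral_indicator_const hB,
    lintegral_mcKernel _ _ hpm hp hm, lintegral_left_jump hl hx0 hm]
  refine le_trans ?_ le_self_add
  rw [mul_assoc]
  gcongr
  calc ENNReal.ofReal (l * a ^ l) * volume (B ∩ Ioo a b)
      = ∫⁻ y in Ioo a b, ENNReal.ofReal (l * a ^ l) * B.indicator (fun _ => 1) y := by
        rw [lintegral_const_mul _ hm, lintegral_indicator_const hB, one_mul,
          Measure.restrict_apply hB]
    _ ≤ ∫⁻ y in Ioo a b, ENNReal.ofReal (l * y ^ (l - 1) * x ^ (-l)) *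
          B.indicator (fun _ => 1) y := by
        refine setLIntegral_mono' measurableSet_Ioo fun y hy => ?_
        refine mul_le_mul' (ENNReal.ofReal_le_ofReal ?_) le_rfl
        have hy0 : 0 < y := ha.trans hy.1
        have h1 : a ^ l ≤ y ^ l := Real.rpow_le_rpow ha.le hy.1.le hl.le
        have h2 : y ^ l ≤ y ^ (l - 1) :=
          Real.rpow_le_rpow_of_exponent_ge hy0 (by linarith [hy.2]) (by linarith)
        have h3 : 1 ≤ x ^ (-l) := Real.one_le_rpow_of_pos_of_le_one_of_nonpos hx0 hx (by linarith)
        calc l * a ^ l = l * a ^ l * 1 := (mul_one _).symm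
          _ ≤ l * y ^ (l - 1) * x ^ (-l) := by
            have h4 := h1.trans h2
            gcongr
    _ ≤ _ := lintegral_mono_set (Ioo_subset_Ioo ha.le hbx)

lemma mcKernel_ge_right {l r : ℝ} (hl : 0 < l) (hr : 0 < r) {p : ℝ → ℝ} (hpm : Measurable p)
    {x a b e : ℝ} (hp : p x ∈ Icc (0 : ℝ) 1) (hx : 0 ≤ x) (hxa : x ≤ a) (hab : a < b)
    (hb : b < 1) (he : e ≤ 1 - p x) {B : Set ℝ} (hB : MeasurableSet B) :
    ENNReal.ofReal e * ENNReal.ofReal (r * (1 - b) ^ r) * volume (B ∩ Ioo a b) ≤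
      mcKernel (betaMeasure 1 l) (betaMeasure 1 r) p x B := by
  have := isProbabilityMeasure_betaMeasure hl
  have := isProbabilityMeasure_betaMeasure hr
  have hm : Measurable (B.indicator fun _ => (1 : ENNReal)) := measurable_const.indicator hB
  have hx1 : x < 1 := by linarith
  rw [← one_mul (mcKernel _ _ _ _ _), ← lintegral_indicator_const hB,
    lintegral_mcKernel _ _ hpm hp hm, lintegral_right_jump hr hx1 hm]
  refine le_trans ?_ le_add_self
  rw [mul_assoc]
  gcongr
  calc ENNReal.ofReal (r * (1 - b) ^ r) * volume (B ∩ Ioo a b)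
      = ∫⁻ y in Ioo a b, ENNReal.ofReal (r * (1 - b) ^ r) * B.indicator (fun _ => 1) y := by
        rw [lintegral_const_mul _ hm, lintegral_indicator_const hB, one_mul,
          Measure.restrict_apply hB]
    _ ≤ ∫⁻ y in Ioo a b, ENNReal.ofReal (r * (1 - y) ^ (r - 1) * (1 - x) ^ (-r)) *
          B.indicator (fun _ => 1) y := by
        refine setLIntegral_mono' measurableSet_Ioo fun y hy => ?_
        refine mul_le_mul' (ENNReal.ofReal_le_ofReal ?_) le_rfl
        have hy0 : 0 < 1 - y := by linarith [hy.2]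
        have h1 : (1 - b) ^ r ≤ (1 - y) ^ r :=
          Real.rpow_le_rpow (by linarith) (by linarith [hy.2]) hr.le
        have h2 : (1 - y) ^ r ≤ (1 - y) ^ (r - 1) :=
          Real.rpow_le_rpow_of_exponent_ge hy0 (by linarith [hy.1]) (by linarith)
        have h3 : 1 ≤ (1 - x) ^ (-r) :=
          Real.one_le_rpow_of_pos_of_le_one_of_nonpos (by linarith) (by linarith) (by linarith)
        calc r * (1 - b) ^ r = r * (1 - b) ^ r * 1 := (mul_one _).symm
          _ ≤ r * (1 - y) ^ (r - 1) * (1 - x) ^ (-r) := by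
            have h4 := h1.trans h2
            gcongr
    _ ≤ _ := lintegral_mono_set (Ioo_subset_Ioo hxa hb.le)

/-- From every point of `[0,1]` the chain enters `[0,δ] ∪ [1-δ,1]` in one step with probability
bounded below, and from there the law of the next step dominates a multiple of Lebesgue measure on
`(δ,1-δ)`. Hence the two-step laws have a common nonzero minorant. -/
lemma exists_two_step_minorant {l r : ℝ} (hl : 0 < l) (hr : 0 < r) {p : ℝ → ℝ}
    (hpm : Measurable p) (hp01 : ∀ x ∈ Icc (0 : ℝ) 1, p x ∈ Icc (0 : ℝ) 1)
    {δ ε : ℝ} (hδ : δ ∈ Ioo (0 : ℝ) (1 / 2)) (hε : 0 < ε)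
    (hleft : ∀ x ∈ Icc (0 : ℝ) δ, ε ≤ 1 - p x) (hright : ∀ x ∈ Icc (1 - δ) 1, ε ≤ p x) :
    ∃ η : Measure ℝ, IsFiniteMeasure η ∧ η univ ≠ 0 ∧ ∀ x ∈ Icc (0 : ℝ) 1,
      η ≤ (mcKernel (betaMeasure 1 l) (betaMeasure 1 r) p x).bind
        (mcKernel (betaMeasure 1 l) (betaMeasure 1 r) p) := by
  have := isProbabilityMeasure_betaMeasure hl
  have := isProbabilityMeasure_betaMeasure hr
  obtain ⟨hδ0, hδ1⟩ := hδ
  set κ := mcKernel (betaMeasure 1 l) (betaMeasure 1 r) p with hκ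
  have hκm : Measurable κ := measurable_mcKernel _ _ hpm
  set O : Set ℝ := Icc 0 δ ∪ Icc (1 - δ) 1 with hO
  have hOm : MeasurableSet O := measurableSet_Icc.union measurableSet_Icc
  set e := min ε (1 / 2) with he
  have he0 : 0 < e := lt_min hε (by norm_num)
  have heε : e ≤ ε := min_le_left _ _
  have he2 : e ≤ 1 / 2 := min_le_right _ _
  have pos : ∀ {s t : ℝ}, 0 < s → 0 < t → ENNReal.ofReal e * ENNReal.ofReal (s * t ^ s) ≠ 0 :=
    fun {s t} hs ht => mul_ne_zero (by simpa using he0)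
      (by have : 0 < s * t ^ s := mul_pos hs (Real.rpow_pos_of_pos ht s)
          simpa using this)
  have fin : ∀ {s t : ℝ}, ENNReal.ofReal e * ENNReal.ofReal (s * t ^ s) ≠ ⊤ :=
    fun {s t} => ENNReal.mul_ne_top ENNReal.ofReal_ne_top ENNReal.ofReal_ne_top
  -- one step into the outer set
  obtain ⟨c₀, hc₀, hc₀', h0⟩ : ∃ c₀ : ENNReal, c₀ ≠ 0 ∧ c₀ ≠ ⊤ ∧
      ∀ x ∈ Icc (0 : ℝ) 1, c₀ ≤ κ x O := by
    refine ⟨min (ENNReal.ofReal e * ENNReal.ofReal (l * (δ / 2) ^ l))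
      (ENNReal.ofReal e * ENNReal.ofReal (r * (δ / 2) ^ r)) * ENNReal.ofReal (δ / 2),
      mul_ne_zero (ne_of_gt (lt_min (pos_iff_ne_zero.2 (pos hl (by linarith)))
        (pos_iff_ne_zero.2 (pos hr (by linarith))))) (by simpa using hδ0),
      ENNReal.mul_ne_top (ne_top_of_le_ne_top fin (min_le_left _ _)) ENNReal.ofReal_ne_top, ?_⟩
    intro x hx
    have L : δ ≤ x → e ≤ p x → min (ENNReal.ofReal e * ENNReal.ofReal (l * (δ / 2) ^ l))
        (ENNReal.ofReal e * ENNReal.ofReal (r * (δ / 2) ^ r)) * ENNReal.ofReal (δ / 2) ≤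
        κ x O := fun h1 h2 => by
      refine le_trans ?_ (mcKernel_ge_left hl hr hpm (hp01 x hx) (a := δ / 2) (b := δ)
        (by linarith) (by linarith) h1 hx.2 h2 hOm)
      rw [inter_eq_right.2 (show _ ⊆ O from fun y hy => Or.inl ⟨by linarith [hy.1], hy.2.le⟩),
        Real.volume_Ioo,
        show δ - δ / 2 = δ / 2 by ring]
      gcongr
      exact min_le_left _ _
    have R : x ≤ 1 - δ → e ≤ 1 - p x →
        min (ENNReal.ofReal e * ENNReal.ofReal (l * (δ / 2) ^ l))
        (ENNReal.ofReal e * ENNReal.ofReal (r * (δ / 2) ^ r)) * ENNReal.ofReal (δ / 2) ≤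
        κ x O := fun h1 h2 => by
      refine le_trans ?_ (mcKernel_ge_right hl hr hpm (hp01 x hx) (a := 1 - δ) (b := 1 - δ / 2)
        hx.1 h1 (by linarith) (by linarith) h2 hOm)
      rw [inter_eq_right.2 (show _ ⊆ O from fun y hy => Or.inr ⟨hy.1.le, by linarith [hy.2]⟩),
        Real.volume_Ioo,
        show 1 - δ / 2 - (1 - δ) = δ / 2 by ring, sub_sub_cancel]
      gcongr
      exact min_le_right _ _
    rcases le_or_gt x δ with h1 | h1
    · exact R (by linarith) (heε.trans (hleft x ⟨hx.1, h1⟩))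
    rcases le_or_gt (1 - δ) x with h2 | h2
    · exact L h1.le (heε.trans (hright x ⟨h2, hx.2⟩))
    rcases le_or_gt (1 / 2) (p x) with h3 | h3
    · exact L h1.le (he2.trans h3)
    · exact R h2.le (he2.trans (by linarith))
  -- one step from the outer set
  obtain ⟨c₁, hc₁, hc₁', h1⟩ : ∃ c₁ : ENNReal, c₁ ≠ 0 ∧ c₁ ≠ ⊤ ∧
      ∀ x ∈ O, ∀ B, MeasurableSet B → c₁ * volume (B ∩ Ioo δ (1 - δ)) ≤ κ x B := by
    refine ⟨min (ENNReal.ofReal e * ENNReal.ofReal (l * δ ^ l))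
      (ENNReal.ofReal e * ENNReal.ofReal (r * δ ^ r)),
      ne_of_gt (lt_min (pos_iff_ne_zero.2 (pos hl hδ0)) (pos_iff_ne_zero.2 (pos hr hδ0))),
      ne_top_of_le_ne_top fin (min_le_left _ _), ?_⟩
    rintro x (hx | hx) B hB
    · refine le_trans ?_ (mcKernel_ge_right hl hr hpm (hp01 x ⟨hx.1, by linarith [hx.2]⟩)
        (a := δ) (b := 1 - δ) hx.1 hx.2 (by linarith) (by linarith) (heε.trans (hleft x hx)) hB)
      rw [sub_sub_cancel]
      gcongr
      exact min_le_right _ _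
    · refine le_trans ?_ (mcKernel_ge_left hl hr hpm (hp01 x ⟨by linarith [hx.1], hx.2⟩)
        (a := δ) (b := 1 - δ) hδ0 (by linarith) hx.1 hx.2 (heε.trans (hright x hx)) hB)
      gcongr
      exact min_le_left _ _
  have hne : c₀ * c₁ ≠ ⊤ := ENNReal.mul_ne_top hc₀' hc₁'
  refine ⟨(c₀ * c₁) • volume.restrict (Ioo δ (1 - δ)), ⟨?_⟩, ?_, fun x hx => ?_⟩
  · simpa using ENNReal.mul_lt_top hne.lt_top (by simp)
  · simp only [Measure.smul_apply, Measure.restrict_apply_univ, Real.volume_Ioo, smul_eq_mul]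
    refine mul_ne_zero (mul_ne_zero hc₀ hc₁) ?_
    simp only [ne_eq, ENNReal.ofReal_eq_zero, not_le]
    linarith
  · refine Measure.le_iff.2 fun B hB => ?_
    rw [Measure.bind_apply hB hκm.aemeasurable, Measure.smul_apply, Measure.restrict_apply hB,
      smul_eq_mul]
    calc c₀ * c₁ * volume (B ∩ Ioo δ (1 - δ))
        = c₁ * volume (B ∩ Ioo δ (1 - δ)) * c₀ := by ring
      _ ≤ c₁ * volume (B ∩ Ioo δ (1 - δ)) * κ x O := by gcongr; exact h0 x hx
      _ = ∫⁻ _ in O, c₁ * volume (B ∩ Ioo δ (1 - δ)) ∂κ x := by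
        rw [setLIntegral_const]
      _ ≤ ∫⁻ y in O, κ y B ∂κ x := setLIntegral_mono' hOm fun y hy => h1 y hy B hB
      _ ≤ _ := setLIntegral_le_lintegral _ _

/-! ### The exponent of the stationary density -/

/-- The weight `r/(1-x) + l/x`. -/
noncomputable def phi (l r x : ℝ) : ℝ := r / (1 - x) + l / x

/-- A primitive of `phi l r` on `(0,1)`; its exponential is `x^l (1-x)^{-r}`. -/
noncomputable def Phi (l r x : ℝ) : ℝ := l * Real.log x - r * Real.log (1 - x)

/-- The primitive of `p * phi l r` vanishing at `1/2`; minus this is the exponent in the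
stationary density. -/
noncomputable def pot (l r : ℝ) (p : ℝ → ℝ) (x : ℝ) : ℝ := ∫ t in (1 / 2 : ℝ)..x, p t * phi l r t

lemma phi_pos {l r x : ℝ} (hl : 0 < l) (hr : 0 < r) (hx : x ∈ Ioo (0 : ℝ) 1) : 0 < phi l r x := by
  have h1 : 0 < 1 - x := by linarith [hx.2]
  have h2 := hx.1
  unfold phi; positivity

lemma measurable_phi (l r : ℝ) : Measurable (phi l r) := by unfold phi; fun_prop

lemma continuousOn_phi (l r : ℝ) : ContinuousOn (phi l r) (Ioo 0 1) := by
  unfold phi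
  refine ContinuousOn.add (ContinuousOn.div (by fun_prop) (by fun_prop) fun x hx => ?_)
    (ContinuousOn.div (by fun_prop) (by fun_prop) fun x hx => hx.1.ne')
  linarith [hx.2]

lemma hasDerivAt_Phi (l r : ℝ) {x : ℝ} (hx : x ∈ Ioo (0 : ℝ) 1) :
    HasDerivAt (Phi l r) (phi l r x) x := by
  have h1 : (1 - x) ≠ 0 := by linarith [hx.2]
  have h2 := ((Real.hasDerivAt_log hx.1.ne').const_mul l).sub
    ((((hasDerivAt_id x).const_sub 1).log h1).const_mul r)
  refine h2.congr_deriv ?_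
  simp only [phi, id]
  ring

lemma exp_Phi (l r : ℝ) {x : ℝ} (hx : x ∈ Ioo (0 : ℝ) 1) :
    Real.exp (Phi l r x) = x ^ l * (1 - x) ^ (-r) := by
  have h1 : 0 < 1 - x := by linarith [hx.2]
  rw [Real.rpow_def_of_pos hx.1, Real.rpow_def_of_pos h1, ← Real.exp_add, Phi]
  congr 1; ring

lemma uIcc_subset_unit {c d : ℝ} (hc : c ∈ Ioo (0 : ℝ) 1) (hd : d ∈ Ioo (0 : ℝ) 1) :
    uIcc c d ⊆ Ioo 0 1 := ordConnected_Ioo.uIcc_subset hc hd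

lemma intervalIntegrable_p {p : ℝ → ℝ} (hpm : Measurable p)
    (hp01 : ∀ x ∈ Icc (0 : ℝ) 1, p x ∈ Icc (0 : ℝ) 1) {c d : ℝ} (hc : c ∈ Ioo (0 : ℝ) 1)
    (hd : d ∈ Ioo (0 : ℝ) 1) : IntervalIntegrable p volume c d := by
  rw [intervalIntegrable_iff]
  refine Measure.integrableOn_of_bounded (M := 1) (by simp) hpm.aestronglyMeasurable ?_
  refine (ae_restrict_mem measurableSet_uIoc).mono fun x hx => ?_
  have hx' := Ioo_subset_Icc_self (uIcc_subset_unit hc hd (uIoc_subset_uIcc hx))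
  rw [Real.norm_eq_abs, abs_of_nonneg (hp01 x hx').1]
  exact (hp01 x hx').2

lemma intervalIntegrable_p_mul {p f : ℝ → ℝ} (hpm : Measurable p)
    (hp01 : ∀ x ∈ Icc (0 : ℝ) 1, p x ∈ Icc (0 : ℝ) 1) (hf : ContinuousOn f (Ioo 0 1))
    {c d : ℝ} (hc : c ∈ Ioo (0 : ℝ) 1) (hd : d ∈ Ioo (0 : ℝ) 1) :
    IntervalIntegrable (fun x => p x * f x) volume c d :=
  (intervalIntegrable_p hpm hp01 hc hd).mul_continuousOn (hf.mono (uIcc_subset_unit hc hd))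

lemma half_mem : (1 / 2 : ℝ) ∈ Ioo (0 : ℝ) 1 := ⟨by norm_num, by norm_num⟩

lemma statDens_eq {l r C : ℝ} {p : ℝ → ℝ} (hpm : Measurable p)
    (hp01 : ∀ x ∈ Icc (0 : ℝ) 1, p x ∈ Icc (0 : ℝ) 1) {x : ℝ} (hx : x ∈ Ioo (0 : ℝ) 1) :
    statDens l r C p x = C * (x ^ l * phi l r x * Real.exp (-pot l r p x)) := by
  have h1 : IntervalIntegrable (fun t => p t * (r / (1 - t))) volume (1 / 2) x :=
    intervalIntegrable_p_mul hpm hp01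
      (ContinuousOn.div (by fun_prop) (by fun_prop) fun y hy => by linarith [hy.2]) half_mem hx
  have h2 : IntervalIntegrable (fun t => p t * (l / t)) volume (1 / 2) x :=
    intervalIntegrable_p_mul hpm hp01
      (ContinuousOn.div (by fun_prop) (by fun_prop) fun y hy => hy.1.ne') half_mem hx
  have h3 : pot l r p x = r * (∫ t in (1 / 2 : ℝ)..x, p t / (1 - t)) +
      l * ∫ t in (1 / 2 : ℝ)..x, p t / t := by
    rw [← intervalIntegral.integral_const_mul, ← intervalIntegral.integral_const_mul, pot]
    simp only [phi, mul_add]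
    rw [intervalIntegral.integral_add h1 h2]
    congr 1 <;> (congr 1; ext t; ring_nf)
  rw [h3, statDens, phi, neg_add, sub_eq_add_neg]
  ring_nf

lemma pot_sub {l r : ℝ} {p : ℝ → ℝ} (hpm : Measurable p)
    (hp01 : ∀ x ∈ Icc (0 : ℝ) 1, p x ∈ Icc (0 : ℝ) 1) {x y : ℝ} (hx : x ∈ Ioo (0 : ℝ) 1)
    (hy : y ∈ Ioo (0 : ℝ) 1) :
    pot l r p y - pot l r p x = ∫ t in x..y, p t * phi l r t :=
  intervalIntegral.integral_interval_sub_left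
    (intervalIntegrable_p_mul hpm hp01 (continuousOn_phi l r) half_mem hy)
    (intervalIntegrable_p_mul hpm hp01 (continuousOn_phi l r) half_mem hx)

lemma integral_phi (l r : ℝ) {x y : ℝ} (hx : x ∈ Ioo (0 : ℝ) 1) (hy : y ∈ Ioo (0 : ℝ) 1) :
    ∫ t in x..y, phi l r t = Phi l r y - Phi l r x :=
  intervalIntegral.integral_eq_sub_of_hasDerivAt
    (fun _ ht => hasDerivAt_Phi l r (uIcc_subset_unit hx hy ht))
    ((continuousOn_phi l r).mono (uIcc_subset_unit hx hy)).intervalIntegrable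

lemma continuousOn_pot {l r : ℝ} {p : ℝ → ℝ} (hpm : Measurable p)
    (hp01 : ∀ x ∈ Icc (0 : ℝ) 1, p x ∈ Icc (0 : ℝ) 1) : ContinuousOn (pot l r p) (Ioo 0 1) := by
  intro x hx
  obtain ⟨hx0, hx1⟩ := hx
  have hc : min (x / 2) (1 / 2) ∈ Ioo (0 : ℝ) 1 :=
    ⟨lt_min (by linarith) (by norm_num), (min_le_right _ _).trans_lt (by norm_num)⟩
  have hd : max ((x + 1) / 2) (1 / 2) ∈ Ioo (0 : ℝ) 1 :=
    ⟨lt_of_lt_of_le (by norm_num) (le_max_right _ _), max_lt (by linarith) (by norm_num)⟩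
  have hcx : min (x / 2) (1 / 2) < x := (min_le_left _ _).trans_lt (by linarith)
  have hxd : x < max ((x + 1) / 2) (1 / 2) := lt_of_lt_of_le (by linarith) (le_max_left _ _)
  have h := intervalIntegral.continuousOn_primitive_interval' (a := 1 / 2)
    (intervalIntegrable_p_mul hpm hp01 (continuousOn_phi l r) hc hd)
    (by rw [uIcc_of_le (hcx.trans hxd).le]; exact ⟨min_le_right _ _, le_max_right _ _⟩)
  rw [uIcc_of_le (hcx.trans hxd).le] at h
  exact (h.continuousAt (Icc_mem_nhds hcx hxd)).continuousWithinAt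

lemma hasDerivAt_pot {l r : ℝ} {p : ℝ → ℝ} (hpm : Measurable p)
    (hp01 : ∀ x ∈ Icc (0 : ℝ) 1, p x ∈ Icc (0 : ℝ) 1) {x : ℝ} (hx : x ∈ Ioo (0 : ℝ) 1)
    (hc : ContinuousAt p x) : HasDerivAt (pot l r p) (p x * phi l r x) x :=
  intervalIntegral.integral_hasDerivAt_right
    (intervalIntegrable_p_mul hpm hp01 (continuousOn_phi l r) half_mem hx)
    (hpm.mul (measurable_phi l r)).stronglyMeasurable.stronglyMeasurableAtFilter
    (hc.mul ((continuousOn_phi l r).continuousAt (Ioo_mem_nhds hx.1 hx.2)))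

/-! ### Boundary behaviour -/

lemma tendsto_Phi_zero {l : ℝ} (r : ℝ) (hl : 0 < l) : Tendsto (Phi l r) (𝓝[>] 0) atBot := by
  have h1 : Tendsto (fun x : ℝ => l * Real.log x) (𝓝[>] 0) atBot :=
    Real.tendsto_log_nhdsGT_zero.const_mul_atBot hl
  have h2 : Tendsto (fun x : ℝ => -(r * Real.log (1 - x))) (𝓝[>] 0) (𝓝 0) := by
    have : ContinuousAt (fun x : ℝ => -(r * Real.log (1 - x))) 0 := by
      refine (continuousAt_const.mul (ContinuousAt.log (by fun_prop) (by norm_num))).neg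
    simpa using this.tendsto.mono_left (nhdsWithin_le_nhds (s := Ioi 0))
  exact h1.atBot_add h2

lemma tendsto_Phi_one (l : ℝ) {r : ℝ} (hr : 0 < r) : Tendsto (Phi l r) (𝓝[<] 1) atTop := by
  have hsub : Tendsto (fun x : ℝ => 1 - x) (𝓝[<] 1) (𝓝[>] 0) := by
    refine tendsto_nhdsWithin_iff.2 ⟨?_, ?_⟩
    · have : Continuous fun x : ℝ => 1 - x := by fun_prop
      simpa using (this.tendsto 1).mono_left (nhdsWithin_le_nhds (s := Iio 1))
    · filter_upwards [self_mem_nhdsWithin] with x hx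
      simpa using hx
  have h1 : Tendsto (fun x : ℝ => -(r * Real.log (1 - x))) (𝓝[<] 1) atTop :=
    tendsto_neg_atBot_atTop.comp ((Real.tendsto_log_nhdsGT_zero.comp hsub).const_mul_atBot hr)
  have h2 : Tendsto (fun x : ℝ => l * Real.log x) (𝓝[<] 1) (𝓝 0) := by
    have : ContinuousAt (fun x : ℝ => l * Real.log x) 1 :=
      continuousAt_const.mul (ContinuousAt.log (by fun_prop) (by norm_num))
    simpa using this.tendsto.mono_left (nhdsWithin_le_nhds (s := Iio 1))
  exact h2.add_atTop h1

/-- Near `0` the bound `p ≤ 1 - ε` makes `Phi - pot ≤ const + ε * Phi`, which tends to `-∞`. -/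
lemma tendsto_exp_Phi_sub_pot {l r : ℝ} (hl : 0 < l) (hr : 0 < r) {p : ℝ → ℝ}
    (hpm : Measurable p) (hp01 : ∀ x ∈ Icc (0 : ℝ) 1, p x ∈ Icc (0 : ℝ) 1) {δ ε : ℝ}
    (hδ : δ ∈ Ioo (0 : ℝ) (1 / 2)) (hε : 0 < ε) (hleft : ∀ x ∈ Icc (0 : ℝ) δ, ε ≤ 1 - p x) :
    Tendsto (fun x => Real.exp (Phi l r x - pot l r p x)) (𝓝[>] 0) (𝓝 0) := by
  have hδ' : δ ∈ Ioo (0 : ℝ) 1 := ⟨hδ.1, by linarith [hδ.2]⟩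
  have hb : Tendsto (fun x => ((1 - ε) * Phi l r δ - pot l r p δ) + ε * Phi l r x) (𝓝[>] 0) atBot :=
    tendsto_atBot_add_const_left _ _ ((tendsto_Phi_zero r hl).const_mul_atBot hε)
  refine Real.tendsto_exp_atBot.comp (tendsto_atBot_mono' _ ?_ hb)
  filter_upwards [Ioo_mem_nhdsGT hδ.1] with y hy
  have hy' : y ∈ Ioo (0 : ℝ) 1 := ⟨hy.1, hy.2.trans hδ'.2⟩
  have h := intervalIntegral.integral_mono_on hy.2.le
    (intervalIntegrable_p_mul hpm hp01 (continuousOn_phi l r) hy' hδ')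
    (((continuousOn_phi l r).mono (uIcc_subset_unit hy' hδ')).intervalIntegrable.const_mul (1 - ε))
    (fun t ht => mul_le_mul_of_nonneg_right
      (by linarith [hleft t ⟨hy.1.le.trans ht.1, ht.2⟩])
      (phi_pos hl hr ⟨hy.1.trans_le ht.1, ht.2.trans_lt hδ'.2⟩).le)
  rw [← pot_sub hpm hp01 hy' hδ', intervalIntegral.integral_const_mul,
    integral_phi l r hy' hδ'] at h
  linarith

lemma tendsto_exp_neg_pot {l r : ℝ} (hl : 0 < l) (hr : 0 < r) {p : ℝ → ℝ}
    (hpm : Measurable p) (hp01 : ∀ x ∈ Icc (0 : ℝ) 1, p x ∈ Icc (0 : ℝ) 1) {δ ε : ℝ}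
    (hδ : δ ∈ Ioo (0 : ℝ) (1 / 2)) (hε : 0 < ε) (hright : ∀ x ∈ Icc (1 - δ) 1, ε ≤ p x) :
    Tendsto (fun x => Real.exp (-pot l r p x)) (𝓝[<] 1) (𝓝 0) := by
  have hδ' : 1 - δ ∈ Ioo (0 : ℝ) 1 := ⟨by linarith [hδ.2], by linarith [hδ.1]⟩
  have hb : Tendsto (fun x => (ε * Phi l r (1 - δ) - pot l r p (1 - δ)) + -(ε * Phi l r x))
      (𝓝[<] 1) atBot :=
    tendsto_atBot_add_const_left _ _
      (tendsto_neg_atTop_atBot.comp ((tendsto_Phi_one l hr).const_mul_atTop hε))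
  refine Real.tendsto_exp_atBot.comp (tendsto_atBot_mono' _ ?_ hb)
  filter_upwards [Ioo_mem_nhdsLT hδ'.2] with y hy
  have hy' : y ∈ Ioo (0 : ℝ) 1 := ⟨hδ'.1.trans hy.1, hy.2⟩
  have h := intervalIntegral.integral_mono_on hy.1.le
    (((continuousOn_phi l r).mono (uIcc_subset_unit hδ' hy')).intervalIntegrable.const_mul ε)
    (intervalIntegrable_p_mul hpm hp01 (continuousOn_phi l r) hδ' hy')
    (fun t ht => mul_le_mul_of_nonneg_right
      (hright t ⟨ht.1, ht.2.trans hy.2.le⟩)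
      (phi_pos hl hr ⟨hδ'.1.trans_le ht.1, ht.2.trans_lt hy.2⟩).le)
  rw [← pot_sub hpm hp01 hδ' hy', intervalIntegral.integral_const_mul,
    integral_phi l r hδ' hy'] at h
  linarith

/-! ### The two flux integrals -/

/-- The mass of `p π x^{-l}` on `(y,1)`, for the unnormalised density `π`. -/
lemma lintegral_flux_left {l r : ℝ} (hl : 0 < l) (hr : 0 < r) {p : ℝ → ℝ}
    (hpm : Measurable p) (hp01 : ∀ x ∈ Icc (0 : ℝ) 1, p x ∈ Icc (0 : ℝ) 1) {S : Set ℝ}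
    (hS : S.Countable) (hSc : ∀ x ∈ Ioo (0 : ℝ) 1 \ S, ContinuousAt p x)
    (hlim : Tendsto (fun x => Real.exp (-pot l r p x)) (𝓝[<] 1) (𝓝 0))
    {y : ℝ} (hy : y ∈ Ioo (0 : ℝ) 1) :
    ∫⁻ x in Ioo y 1, ENNReal.ofReal (p x * (phi l r x * Real.exp (-pot l r p x))) =
      ENNReal.ofReal (Real.exp (-pot l r p y)) := by
  have hsub : Ioo y 1 ⊆ Ioo 0 1 := Ioo_subset_Ioo_left hy.1.le
  have hec : ContinuousOn (fun x => Real.exp (-pot l r p x)) (Ioo 0 1) :=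
    (continuousOn_pot hpm hp01).neg.rexp
  have hwc : ContinuousOn (fun x => phi l r x * Real.exp (-pot l r p x)) (Ioo 0 1) :=
    (continuousOn_phi l r).mul hec
  rw [lintegral_Ioo_of_hasDerivAt (F := fun x => -Real.exp (-pot l r p x))
    (A := -Real.exp (-pot l r p y)) (B := -0) hy.2 hS (hec.mono hsub).neg]
  · simp
  · intro x hx
    have h := (hasDerivAt_pot (l := l) (r := r) hpm hp01 (hsub hx.1)
      (hSc x ⟨hsub hx.1, hx.2⟩)).neg.exp.neg
    refine h.congr_deriv ?_
    simp only [Pi.neg_apply]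
    ring
  · exact hpm.aemeasurable.mul ((hwc.mono hsub).aemeasurable measurableSet_Ioo)
  · intro x hx
    have h1 := (hp01 x (Ioo_subset_Icc_self (hsub hx))).1
    have h2 := phi_pos hl hr (hsub hx)
    positivity
  · intro c d hc hcd hd
    exact intervalIntegrable_p_mul hpm hp01 hwc ⟨hy.1.trans hc, hcd.trans_lt hd⟩
      ⟨(hy.1.trans hc).trans_le hcd, hd⟩
  · have := (hec.continuousAt (Ioo_mem_nhds hy.1 hy.2)).neg
    exact this.tendsto.mono_left nhdsWithin_le_nhds
  · exact hlim.neg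

/-- The mass of `(1-p) π (1-x)^{-r}` on `(0,y)`, for the unnormalised density `π`. -/
lemma lintegral_flux_right {l r : ℝ} (hl : 0 < l) (hr : 0 < r) {p : ℝ → ℝ}
    (hpm : Measurable p) (hp01 : ∀ x ∈ Icc (0 : ℝ) 1, p x ∈ Icc (0 : ℝ) 1) {S : Set ℝ}
    (hS : S.Countable) (hSc : ∀ x ∈ Ioo (0 : ℝ) 1 \ S, ContinuousAt p x)
    (hlim : Tendsto (fun x => Real.exp (Phi l r x - pot l r p x)) (𝓝[>] 0) (𝓝 0))
    {y : ℝ} (hy : y ∈ Ioo (0 : ℝ) 1) :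
    ∫⁻ x in Ioo 0 y,
        ENNReal.ofReal ((1 - p x) * (phi l r x * Real.exp (Phi l r x - pot l r p x))) =
      ENNReal.ofReal (Real.exp (Phi l r y - pot l r p y)) := by
  have hsub : Ioo 0 y ⊆ Ioo 0 1 := Ioo_subset_Ioo_right hy.2.le
  have hPc : ContinuousOn (Phi l r) (Ioo 0 1) := fun x hx =>
    (hasDerivAt_Phi l r hx).continuousAt.continuousWithinAt
  have hec : ContinuousOn (fun x => Real.exp (Phi l r x - pot l r p x)) (Ioo 0 1) :=
    (hPc.sub (continuousOn_pot hpm hp01)).rexp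
  have hwc : ContinuousOn (fun x => phi l r x * Real.exp (Phi l r x - pot l r p x)) (Ioo 0 1) :=
    (continuousOn_phi l r).mul hec
  have hq01 : ∀ x ∈ Icc (0 : ℝ) 1, 1 - p x ∈ Icc (0 : ℝ) 1 := fun x hx =>
    ⟨by linarith [(hp01 x hx).2], by linarith [(hp01 x hx).1]⟩
  rw [lintegral_Ioo_of_hasDerivAt (F := fun x => Real.exp (Phi l r x - pot l r p x))
    (A := 0) (B := Real.exp (Phi l r y - pot l r p y)) hy.1 hS (hec.mono hsub)]
  · simp
  · intro x hx
    have h := ((hasDerivAt_Phi l r (hsub hx.1)).sub (hasDerivAt_pot (l := l) (r := r) hpm hp01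
      (hsub hx.1) (hSc x ⟨hsub hx.1, hx.2⟩))).exp
    refine h.congr_deriv ?_
    simp only [Pi.sub_apply]
    ring
  · exact (hpm.const_sub 1).aemeasurable.mul ((hwc.mono hsub).aemeasurable measurableSet_Ioo)
  · intro x hx
    have h1 := (hq01 x (Ioo_subset_Icc_self (hsub hx))).1
    have h2 := phi_pos hl hr (hsub hx)
    positivity
  · intro c d hc hcd hd
    exact intervalIntegrable_p_mul (hpm.const_sub 1) hq01 hwc ⟨hc, (hcd.trans_lt hd).trans hy.2⟩
      ⟨hc.trans_le hcd, hd.trans hy.2⟩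
  · exact hlim
  · exact (hec.continuousAt (Ioo_mem_nhds hy.1 hy.2)).tendsto.mono_left nhdsWithin_le_nhds

/-! ### Invariance -/

/-- Tonelli on the triangle `0 < y < x < 1`. -/
lemma lintegral_triangle {a g : ℝ → ENNReal} (ha : Measurable a) (hg : Measurable g) :
    ∫⁻ x in Ioo (0 : ℝ) 1, g x * ∫⁻ y in Ioo 0 x, a y =
      ∫⁻ y in Ioo (0 : ℝ) 1, a y * ∫⁻ x in Ioo y 1, g x := by
  have hset : MeasurableSet {z : ℝ × ℝ | z.2 < z.1} := measurableSet_lt measurable_snd measurable_fst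
  have hk : Measurable (fun z : ℝ × ℝ => {z : ℝ × ℝ | z.2 < z.1}.indicator
      (fun z => g z.1 * a z.2) z) := Measurable.indicator (by fun_prop) hset
  have hswap := lintegral_lintegral_swap (μ := volume.restrict (Ioo (0 : ℝ) 1))
    (ν := volume.restrict (Ioo (0 : ℝ) 1))
    (f := fun x y => {z : ℝ × ℝ | z.2 < z.1}.indicator (fun z => g z.1 * a z.2) (x, y))
    hk.aemeasurable
  calc _ = _ := setLIntegral_congr_fun measurableSet_Ioo fun x hx => ?_
    _ = _ := hswap
    _ = _ := setLIntegral_congr_fun measurableSet_Ioo fun y hy => ?_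
  · have e : (fun y => {z : ℝ × ℝ | z.2 < z.1}.indicator (fun z => g z.1 * a z.2) (x, y)) =
        (Iio x).indicator fun y => g x * a y := by
      ext y; by_cases h : y < x <;> simp [h]
    have e' : Iio x ∩ Ioo 0 1 = Ioo 0 x := by
      ext y; exact ⟨fun h => ⟨h.2.1, h.1⟩, fun h => ⟨h.2, h.1, h.2.trans hx.2⟩⟩
    rw [e, lintegral_indicator measurableSet_Iio, Measure.restrict_restrict measurableSet_Iio, e',
      lintegral_const_mul _ ha]
  · have e : (fun x => {z : ℝ × ℝ | z.2 < z.1}.indicator (fun z => g z.1 * a z.2) (x, y)) =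
        (Ioi y).indicator fun x => a y * g x := by
      ext x; by_cases h : y < x <;> simp [h, mul_comm]
    have e' : Ioi y ∩ Ioo 0 1 = Ioo y 1 := by
      ext x; exact ⟨fun h => ⟨h.1, h.2.2⟩, fun h => ⟨h.1, hy.1.trans h.1, h.2⟩⟩
    rw [e, lintegral_indicator measurableSet_Ioi, Measure.restrict_restrict measurableSet_Ioi, e',
      lintegral_const_mul _ hg]

lemma continuousOn_statDens {l r C : ℝ} {p : ℝ → ℝ} (hpm : Measurable p)
    (hp01 : ∀ x ∈ Icc (0 : ℝ) 1, p x ∈ Icc (0 : ℝ) 1) :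
    ContinuousOn (statDens l r C p) (Ioo 0 1) := by
  refine ContinuousOn.congr (f := fun x => C * (x ^ l * phi l r x * Real.exp (-pot l r p x))) ?_
    fun x hx => statDens_eq hpm hp01 hx
  refine continuousOn_const.mul (ContinuousOn.mul (ContinuousOn.mul ?_ (continuousOn_phi l r))
    (continuousOn_pot hpm hp01).neg.rexp)
  exact continuousOn_id.rpow_const fun x hx => Or.inl hx.1.ne'

lemma measurable_indicator_ofReal {f : ℝ → ℝ} (hf : ContinuousOn f (Ioo 0 1)) :
    Measurable ((Ioo (0 : ℝ) 1).indicator fun x => ENNReal.ofReal (f x)) := by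
  classical
  rw [← piecewise_eq_indicator]
  exact ContinuousOn.measurable_piecewise
    (ENNReal.continuous_ofReal.comp_continuousOn hf) continuousOn_const measurableSet_Ioo

/-- Integration against the measure with density proportional to the stationary one. -/
lemma lintegral_statDens {l r C : ℝ} {p : ℝ → ℝ} (hpm : Measurable p)
    (hp01 : ∀ x ∈ Icc (0 : ℝ) 1, p x ∈ Icc (0 : ℝ) 1) {f : ℝ → ENNReal} (hf : Measurable f) :
    ∫⁻ x, f x ∂(volume.withDensity ((Ioo (0 : ℝ) 1).indicator
        fun z => ENNReal.ofReal (statDens l r C p z))) =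
      ∫⁻ x in Ioo (0 : ℝ) 1, ENNReal.ofReal (statDens l r C p x) * f x := by
  rw [lintegral_withDensity_eq_lintegral_mul _
      (measurable_indicator_ofReal (continuousOn_statDens hpm hp01)) hf,
    ← lintegral_indicator measurableSet_Ioo]
  congr 1
  ext z
  by_cases hz : z ∈ Ioo (0 : ℝ) 1 <;> simp [hz]

/-- The jump densities, integrated against the density, split into the two flux integrals; these
are `exp (-pot)` and `exp (Phi - pot)`, and recombine to the density itself. -/
lemma statDens_invariant {l r : ℝ} (hl : 0 < l) (hr : 0 < r) {p : ℝ → ℝ}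
    (hpm : Measurable p) (hp01 : ∀ x ∈ Icc (0 : ℝ) 1, p x ∈ Icc (0 : ℝ) 1) {S : Set ℝ}
    (hS : S.Countable) (hSc : ∀ x ∈ Ioo (0 : ℝ) 1 \ S, ContinuousAt p x)
    (hlim0 : Tendsto (fun x => Real.exp (Phi l r x - pot l r p x)) (𝓝[>] 0) (𝓝 0))
    (hlim1 : Tendsto (fun x => Real.exp (-pot l r p x)) (𝓝[<] 1) (𝓝 0)) :
    (volume.withDensity ((Ioo (0 : ℝ) 1).indicator
      fun z => ENNReal.ofReal (statDens l r 1 p z))).bind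
        (mcKernel (betaMeasure 1 l) (betaMeasure 1 r) p) =
    volume.withDensity ((Ioo (0 : ℝ) 1).indicator
      fun z => ENNReal.ofReal (statDens l r 1 p z)) := by
  have := isProbabilityMeasure_betaMeasure hl
  have := isProbabilityMeasure_betaMeasure hr
  have hκm : Measurable (mcKernel (betaMeasure 1 l) (betaMeasure 1 r) p) :=
    measurable_mcKernel _ _ hpm
  ext B hB
  have hBm : Measurable (B.indicator fun _ => (1 : ENNReal)) := measurable_const.indicator hB
  have hκB : Measurable fun x => mcKernel (betaMeasure 1 l) (betaMeasure 1 r) p x B :=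
    (Measure.measurable_coe hB).comp hκm
  rw [Measure.bind_apply hB hκm.aemeasurable,
    lintegral_statDens hpm hp01 hκB]
  set w : ℝ → ℝ := fun x => phi l r x * Real.exp (-pot l r p x) with hw
  set v : ℝ → ℝ := fun x => phi l r x * Real.exp (Phi l r x - pot l r p x) with hv
  have hPc : ContinuousOn (Phi l r) (Ioo 0 1) := fun x hx =>
    (hasDerivAt_Phi l r hx).continuousAt.continuousWithinAt
  have hwc : ContinuousOn w (Ioo 0 1) :=
    (continuousOn_phi l r).mul (continuousOn_pot hpm hp01).neg.rexp
  have hvc : ContinuousOn v (Ioo 0 1) :=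
    (continuousOn_phi l r).mul (hPc.sub (continuousOn_pot hpm hp01)).rexp
  -- measurable versions of the two flux densities, cut off outside `(0,1)`
  set g : ℝ → ENNReal := fun x => ENNReal.ofReal (p x) *
    (Ioo (0 : ℝ) 1).indicator (fun x => ENNReal.ofReal (w x)) x with hg
  set h : ℝ → ENNReal := fun x => ENNReal.ofReal (1 - p x) *
    (Ioo (0 : ℝ) 1).indicator (fun x => ENNReal.ofReal (v x)) x with hh
  have hgm : Measurable g := hpm.ennreal_ofReal.mul (measurable_indicator_ofReal hwc)
  have hhm : Measurable h := (hpm.const_sub 1).ennreal_ofReal.mul (measurable_indicator_ofReal hvc)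
  have hg_eq : ∀ x ∈ Ioo (0 : ℝ) 1, g x = ENNReal.ofReal (p x * w x) := fun x hx => by
    rw [hg, ENNReal.ofReal_mul (hp01 x (Ioo_subset_Icc_self hx)).1]
    simp [hx]
  have hh_eq : ∀ x ∈ Ioo (0 : ℝ) 1, h x = ENNReal.ofReal ((1 - p x) * v x) := fun x hx => by
    rw [hh, ENNReal.ofReal_mul (by linarith [(hp01 x (Ioo_subset_Icc_self hx)).2])]
    simp [hx]
  set a : ℝ → ENNReal := fun y => ENNReal.ofReal (l * y ^ (l - 1)) * B.indicator (fun _ => 1) y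
    with ha
  set b : ℝ → ENNReal := fun y => ENNReal.ofReal (r * (1 - y) ^ (r - 1)) *
    B.indicator (fun _ => 1) y with hb
  have ham : Measurable a := Measurable.mul (by fun_prop) hBm
  have hbm : Measurable b := Measurable.mul (by fun_prop) hBm
  have step1 : ∀ x ∈ Ioo (0 : ℝ) 1, ENNReal.ofReal (statDens l r 1 p x) *
      mcKernel (betaMeasure 1 l) (betaMeasure 1 r) p x B =
      g x * (∫⁻ y in Ioo 0 x, a y) + h x * ∫⁻ y in Ioo x 1, b y := by
    intro x hx
    have hx1 : 0 < 1 - x := by linarith [hx.2]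
    have hpx := hp01 x (Ioo_subset_Icc_self hx)
    have hφ := phi_pos hl hr hx
    have hxl : x ^ l ≠ 0 := (Real.rpow_pos_of_pos hx.1 l).ne'
    have e1 : ∫⁻ y in Ioo 0 x, ENNReal.ofReal (l * y ^ (l - 1) * x ^ (-l)) *
        B.indicator (fun _ => 1) y = ENNReal.ofReal (x ^ (-l)) * ∫⁻ y in Ioo 0 x, a y := by
      rw [← lintegral_const_mul _ ham]
      refine setLIntegral_congr_fun measurableSet_Ioo fun y _ => ?_
      rw [ha, mul_comm (l * y ^ (l - 1)), ENNReal.ofReal_mul (Real.rpow_nonneg hx.1.le _), mul_assoc]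
    have e2 : ∫⁻ y in Ioo x 1, ENNReal.ofReal (r * (1 - y) ^ (r - 1) * (1 - x) ^ (-r)) *
        B.indicator (fun _ => 1) y = ENNReal.ofReal ((1 - x) ^ (-r)) * ∫⁻ y in Ioo x 1, b y := by
      rw [← lintegral_const_mul _ hbm]
      refine setLIntegral_congr_fun measurableSet_Ioo fun y _ => ?_
      rw [hb, mul_comm (r * (1 - y) ^ (r - 1)), ENNReal.ofReal_mul (Real.rpow_nonneg hx1.le _),
        mul_assoc]
    have hs : 0 ≤ statDens l r 1 p x := by
      rw [statDens_eq hpm hp01 hx]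
      have := Real.rpow_nonneg hx.1.le l
      positivity
    rw [← one_mul (mcKernel _ _ _ _ _), ← lintegral_indicator_const hB,
      lintegral_mcKernel _ _ hpm hpx hBm, lintegral_left_jump hl hx.1 hBm,
      lintegral_right_jump hr hx.2 hBm, e1, e2, hg_eq x hx, hh_eq x hx, mul_add,
      ← mul_assoc, ← mul_assoc, ← mul_assoc, ← mul_assoc,
      ← ENNReal.ofReal_mul hs, ← ENNReal.ofReal_mul hs,
      ← ENNReal.ofReal_mul (mul_nonneg hs hpx.1),
      ← ENNReal.ofReal_mul (mul_nonneg hs (by linarith [hpx.2])), statDens_eq hpm hp01 hx]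
    congr 3
    · rw [hw, Real.rpow_neg hx.1.le]
      field_simp
    · simp only [hv, sub_eq_add_neg (Phi l r x), Real.exp_add, exp_Phi l r hx]
      ring
  rw [setLIntegral_congr_fun measurableSet_Ioo step1]
  have hi : Measurable fun x => ∫⁻ y in Ioo 0 x, a y := by
    have : Measurable (fun z : ℝ × ℝ => {z : ℝ × ℝ | 0 < z.2 ∧ z.2 < z.1}.indicator
        (fun z => a z.2) z) :=
      Measurable.indicator (by fun_prop) ((measurableSet_lt measurable_const measurable_snd).inter
        (measurableSet_lt measurable_snd measurable_fst))
    convert this.lintegral_prod_right' (ν := volume) using 2 with x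
    rw [← lintegral_indicator measurableSet_Ioo]
    rfl
  have hj : Measurable fun y => ∫⁻ x in Ioo y 1, g x := by
    have : Measurable (fun z : ℝ × ℝ => {z : ℝ × ℝ | z.1 < z.2 ∧ z.2 < 1}.indicator
        (fun z => g z.2) z) :=
      Measurable.indicator (by fun_prop) ((measurableSet_lt measurable_fst measurable_snd).inter
        (measurableSet_lt measurable_snd measurable_const))
    convert this.lintegral_prod_right' (ν := volume) using 2 with y
    rw [← lintegral_indicator measurableSet_Ioo]
    rfl
  have hgi : Measurable fun x => g x * ∫⁻ y in Ioo 0 x, a y := hgm.mul hi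
  have haj : Measurable fun y => a y * ∫⁻ x in Ioo y 1, g x := ham.mul hj
  rw [lintegral_add_left hgi, lintegral_triangle ham hgm, ← lintegral_triangle hhm hbm,
    ← lintegral_add_left haj]
  rw [← one_mul (volume.withDensity _ B), ← lintegral_indicator_const hB,
    lintegral_statDens hpm hp01 hBm]
  refine setLIntegral_congr_fun measurableSet_Ioo fun y hy => ?_
  have hy1 : 0 < 1 - y := by linarith [hy.2]
  rw [setLIntegral_congr_fun measurableSet_Ioo
      (fun x hx => hg_eq x ⟨hy.1.trans hx.1, hx.2⟩),
    setLIntegral_congr_fun measurableSet_Ioo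
      (fun x hx => hh_eq x ⟨hx.1, hx.2.trans hy.2⟩),
    lintegral_flux_left hl hr hpm hp01 hS hSc hlim1 hy,
    lintegral_flux_right hl hr hpm hp01 hS hSc hlim0 hy, ha, hb]
  dsimp only
  have hn1 : 0 ≤ l * y ^ (l - 1) := mul_nonneg hl.le (Real.rpow_nonneg hy.1.le _)
  have hn2 : 0 ≤ r * (1 - y) ^ (r - 1) := mul_nonneg hr.le (Real.rpow_nonneg hy1.le _)
  rw [mul_right_comm, mul_right_comm (ENNReal.ofReal (r * _)), ← add_mul,
    ← ENNReal.ofReal_mul hn1, ← ENNReal.ofReal_mul hn2,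
    ← ENNReal.ofReal_add (mul_nonneg hn1 (Real.exp_nonneg _))
      (mul_nonneg hn2 (Real.exp_nonneg _)), statDens_eq hpm hp01 hy]
  congr 2
  rw [sub_eq_add_neg (Phi l r y), Real.exp_add, exp_Phi l r hy, Real.rpow_sub_one hy.1.ne',
    Real.rpow_sub_one hy1.ne', Real.rpow_neg hy1.le, phi]
  have : (1 - y) ^ r ≠ 0 := (Real.rpow_pos_of_pos hy1 r).ne'
  have := hy.1.ne'
  have := hy1.ne'
  field_simp
  ring

/-! ### Normalisation -/

lemma statDens_pos {l r : ℝ} (hl : 0 < l) (hr : 0 < r) {C : ℝ} (hC : 0 < C) {p : ℝ → ℝ}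
    (hpm : Measurable p) (hp01 : ∀ x ∈ Icc (0 : ℝ) 1, p x ∈ Icc (0 : ℝ) 1) {x : ℝ}
    (hx : x ∈ Ioo (0 : ℝ) 1) : 0 < statDens l r C p x := by
  rw [statDens_eq hpm hp01 hx]
  have := Real.rpow_pos_of_pos hx.1 l
  have := phi_pos hl hr hx
  positivity

/-- Near `0`, where `1 - p ≥ ε`, and near `1`, where `p ≥ ε`, the density is at most `ε⁻¹` times a
flux density, whose integral is finite. -/
lemma lintegral_statDens_lt_top {l r : ℝ} (hl : 0 < l) (hr : 0 < r) {p : ℝ → ℝ}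
    (hpm : Measurable p) (hp01 : ∀ x ∈ Icc (0 : ℝ) 1, p x ∈ Icc (0 : ℝ) 1) {S : Set ℝ}
    (hS : S.Countable) (hSc : ∀ x ∈ Ioo (0 : ℝ) 1 \ S, ContinuousAt p x) {δ ε : ℝ}
    (hδ : δ ∈ Ioo (0 : ℝ) (1 / 2)) (hε : 0 < ε)
    (hleft : ∀ x ∈ Icc (0 : ℝ) δ, ε ≤ 1 - p x) (hright : ∀ x ∈ Icc (1 - δ) 1, ε ≤ p x) :
    ∫⁻ x in Ioo (0 : ℝ) 1, ENNReal.ofReal (statDens l r 1 p x) < ⊤ := by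
  have hδ0 := hδ.1
  have hδ1 := hδ.2
  have hlim0 := tendsto_exp_Phi_sub_pot hl hr hpm hp01 hδ hε hleft
  have hlim1 := tendsto_exp_neg_pot hl hr hpm hp01 hδ hε hright
  have hcover : Ioo (0 : ℝ) 1 ⊆ (Ioo 0 δ ∪ Ioo (1 - δ) 1) ∪ Icc δ (1 - δ) := by
    intro x hx
    rcases lt_or_ge x δ with h | h
    · exact Or.inl (Or.inl ⟨hx.1, h⟩)
    rcases lt_or_ge (1 - δ) x with h' | h'
    · exact Or.inl (Or.inr ⟨h', hx.2⟩)
    · exact Or.inr ⟨h, h'⟩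
  refine (lintegral_mono_set hcover).trans_lt ((lintegral_union_le _ _ _).trans_lt
    (ENNReal.add_lt_top.2 ⟨(lintegral_union_le _ _ _).trans_lt
      (ENNReal.add_lt_top.2 ⟨?_, ?_⟩), ?_⟩))
  · refine (setLIntegral_mono' (g := fun x => ENNReal.ofReal ε⁻¹ * ENNReal.ofReal
      ((1 - p x) * (phi l r x * Real.exp (Phi l r x - pot l r p x)))) measurableSet_Ioo
      fun x hx => ?_).trans_lt ?_
    · have hx' : x ∈ Ioo (0 : ℝ) 1 := ⟨hx.1, by linarith [hx.2]⟩
      have hx1 : 0 < 1 - x := by linarith [hx'.2]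
      rw [← ENNReal.ofReal_mul (inv_nonneg.2 hε.le)]
      refine ENNReal.ofReal_le_ofReal ?_
      rw [statDens_eq hpm hp01 hx', one_mul, ← div_eq_inv_mul, le_div_iff₀ hε,
        sub_eq_add_neg (Phi l r x), Real.exp_add, exp_Phi l r hx']
      have h1 : ε ≤ 1 - p x := hleft x ⟨hx.1.le, hx.2.le⟩
      have h2 : 1 ≤ (1 - x) ^ (-r) :=
        Real.one_le_rpow_of_pos_of_le_one_of_nonpos hx1 (by linarith [hx'.1]) (by linarith)
      have h3 : 0 ≤ x ^ l * phi l r x * Real.exp (-pot l r p x) := by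
        have := Real.rpow_pos_of_pos hx'.1 l
        have := phi_pos hl hr hx'
        positivity
      calc _ = (x ^ l * phi l r x * Real.exp (-pot l r p x)) * (ε * 1) := by ring
        _ ≤ (x ^ l * phi l r x * Real.exp (-pot l r p x)) * ((1 - p x) * (1 - x) ^ (-r)) := by
          gcongr
          exact hε.le.trans h1
        _ = _ := by ring
    · rw [lintegral_const_mul' _ _ ENNReal.ofReal_ne_top,
        lintegral_flux_right hl hr hpm hp01 hS hSc hlim0 ⟨hδ0, by linarith⟩]
      exact ENNReal.mul_lt_top ENNReal.ofReal_lt_top ENNReal.ofReal_lt_top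
  · refine (setLIntegral_mono' (g := fun x => ENNReal.ofReal ε⁻¹ * ENNReal.ofReal
      (p x * (phi l r x * Real.exp (-pot l r p x)))) measurableSet_Ioo
      fun x hx => ?_).trans_lt ?_
    · have hx' : x ∈ Ioo (0 : ℝ) 1 := ⟨by linarith [hx.1], hx.2⟩
      rw [← ENNReal.ofReal_mul (inv_nonneg.2 hε.le)]
      refine ENNReal.ofReal_le_ofReal ?_
      rw [statDens_eq hpm hp01 hx', one_mul, ← div_eq_inv_mul, le_div_iff₀ hε]
      have h1 : ε ≤ p x := hright x ⟨hx.1.le, hx.2.le⟩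
      have h2 : x ^ l ≤ 1 := Real.rpow_le_one hx'.1.le hx'.2.le hl.le
      have h3 : 0 ≤ phi l r x * Real.exp (-pot l r p x) := by
        have := phi_pos hl hr hx'
        positivity
      have h4 := Real.rpow_nonneg hx'.1.le l
      calc _ = (phi l r x * Real.exp (-pot l r p x)) * (x ^ l * ε) := by ring
        _ ≤ (phi l r x * Real.exp (-pot l r p x)) * (1 * p x) := by gcongr
        _ = _ := by ring
    · rw [lintegral_const_mul' _ _ ENNReal.ofReal_ne_top,
        lintegral_flux_left hl hr hpm hp01 hS hSc hlim1 ⟨by linarith, by linarith⟩]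
      exact ENNReal.mul_lt_top ENNReal.ofReal_lt_top ENNReal.ofReal_lt_top
  · have hsub : Icc δ (1 - δ) ⊆ Ioo 0 1 := fun x hx =>
      ⟨hδ0.trans_le hx.1, hx.2.trans_lt (by linarith)⟩
    have hcomp : IntegrableOn (statDens l r 1 p) (Icc δ (1 - δ)) volume :=
      ((continuousOn_statDens hpm hp01).mono hsub).integrableOn_compact isCompact_Icc
    exact hcomp.integrable.lintegral_lt_top

/-- The density can be normalised, and the resulting probability measure is invariant. -/
lemma exists_normalised {l r : ℝ} (hl : 0 < l) (hr : 0 < r) {p : ℝ → ℝ}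
    (hpm : Measurable p) (hp01 : ∀ x ∈ Icc (0 : ℝ) 1, p x ∈ Icc (0 : ℝ) 1) {S : Set ℝ}
    (hS : S.Countable) (hSc : ∀ x ∈ Ioo (0 : ℝ) 1 \ S, ContinuousAt p x) {δ ε : ℝ}
    (hδ : δ ∈ Ioo (0 : ℝ) (1 / 2)) (hε : 0 < ε)
    (hleft : ∀ x ∈ Icc (0 : ℝ) δ, ε ≤ 1 - p x) (hright : ∀ x ∈ Icc (1 - δ) 1, ε ≤ p x) :
    ∃ C : ℝ, 0 < C ∧ (∫ x in Ioo (0 : ℝ) 1, statDens l r C p x) = 1 ∧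
      ∃ μ : Measure ℝ, μ = (volume.withDensity ((Ioo (0 : ℝ) 1).indicator
        fun z => ENNReal.ofReal (statDens l r C p z))) ∧
      IsProbabilityMeasure μ ∧ μ (Icc 0 1) = 1 ∧
      μ.bind (mcKernel (betaMeasure 1 l) (betaMeasure 1 r) p) = μ := by
  set Z := ∫⁻ x in Ioo (0 : ℝ) 1, ENNReal.ofReal (statDens l r 1 p x) with hZ
  have hZtop : Z ≠ ⊤ :=
    (lintegral_statDens_lt_top hl hr hpm hp01 hS hSc hδ hε hleft hright).ne
  have hZ0 : Z ≠ 0 := by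
    intro h0
    have hm := measurable_indicator_ofReal (continuousOn_statDens (l := l) (r := r) (C := 1) hpm hp01)
    rw [hZ, ← lintegral_indicator measurableSet_Ioo, lintegral_eq_zero_iff hm] at h0
    have hsub : Ioo (0 : ℝ) 1 ⊆ {x | ¬ ((Ioo (0 : ℝ) 1).indicator
        (fun x => ENNReal.ofReal (statDens l r 1 p x)) x = (0 : ℝ → ENNReal) x)} := by
      intro x hx
      have := statDens_pos hl hr one_pos hpm hp01 hx
      simpa [hx.1, hx.2] using this
    have := measure_mono_null hsub (ae_iff.1 h0)
    simp at this
  have hZr : 0 < Z.toReal := ENNReal.toReal_pos hZ0 hZtop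
  have hCinv : ENNReal.ofReal (Z.toReal⁻¹) = Z⁻¹ := by
    rw [ENNReal.ofReal_inv_of_pos hZr, ENNReal.ofReal_toReal hZtop]
  have hscale : ∀ x, ENNReal.ofReal (statDens l r (Z.toReal⁻¹) p x) =
      Z⁻¹ * ENNReal.ofReal (statDens l r 1 p x) := fun x => by
    rw [← hCinv, ← ENNReal.ofReal_mul (inv_nonneg.2 hZr.le)]
    congr 1
    simp only [statDens]
    ring
  have hmass : ∫⁻ x in Ioo (0 : ℝ) 1, ENNReal.ofReal (statDens l r (Z.toReal⁻¹) p x) = 1 := by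
    simp_rw [hscale]
    rw [lintegral_const_mul' _ _ (ENNReal.inv_ne_top.2 hZ0), ← hZ, ENNReal.inv_mul_cancel hZ0 hZtop]
  have hμ : ∀ T : Set ℝ, MeasurableSet T → Ioo (0 : ℝ) 1 ⊆ T →
      (volume.withDensity ((Ioo (0 : ℝ) 1).indicator
        fun z => ENNReal.ofReal (statDens l r (Z.toReal⁻¹) p z))) T = 1 := by
    intro T hT hsub
    rw [withDensity_apply _ hT, ← hmass, lintegral_indicator measurableSet_Ioo,
      Measure.restrict_restrict measurableSet_Ioo, inter_eq_left.2 hsub]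
  refine ⟨Z.toReal⁻¹, inv_pos.2 hZr, ?_, _, rfl, ⟨hμ univ .univ (subset_univ _)⟩,
    hμ _ measurableSet_Icc Ioo_subset_Icc_self, ?_⟩
  · rw [integral_eq_lintegral_of_nonneg_ae, hmass, ENNReal.toReal_one]
    · filter_upwards [ae_restrict_mem measurableSet_Ioo] with x hx
      exact (statDens_pos hl hr (inv_pos.2 hZr) hpm hp01 hx).le
    · exact (continuousOn_statDens hpm hp01).aestronglyMeasurable measurableSet_Ioo
  · have hsmul : (Ioo (0 : ℝ) 1).indicator
        (fun z => ENNReal.ofReal (statDens l r (Z.toReal⁻¹) p z)) =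
        Z⁻¹ • (Ioo (0 : ℝ) 1).indicator (fun z => ENNReal.ofReal (statDens l r 1 p z)) := by
      ext x
      by_cases hx : x ∈ Ioo (0 : ℝ) 1 <;> simp [hx, hscale]
    rw [hsmul, withDensity_smul _ (measurable_indicator_ofReal (continuousOn_statDens hpm hp01)),
      Measure.bind_smul, statDens_invariant hl hr hpm hp01 hS hSc
        (tendsto_exp_Phi_sub_pot hl hr hpm hp01 hδ hε hleft)
        (tendsto_exp_neg_pot hl hr hpm hp01 hδ hε hright)]

/-- Pointwise form of the bound given by the iterated supremum. For `x ∉ s` the inner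
supremum has the junk value `0`, which is at most `M` and so does not disturb boundedness. -/
lemma le_of_iSup_eq {f : ℝ → ℝ} {s : Set ℝ} {M c : ℝ} (hM : 0 ≤ M) (hf : ∀ x ∈ s, f x ≤ M)
    (h : (⨆ x ∈ s, f x) = c) {x : ℝ} (hx : x ∈ s) : f x ≤ c := by
  have hb : BddAbove (range fun x => ⨆ _ : x ∈ s, f x) := by
    refine ⟨M, ?_⟩
    rintro _ ⟨y, rfl⟩
    exact Real.iSup_le (fun hy => hf y hy) hM
  have := le_ciSup hb x
  rw [h] at this
  simpa [hx] using this

/-- If `p` is piecewise continuous on `[0,1]` and satisfies [E1], and `F_L = Beta(1,l)`,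
`F_R = Beta(1,r)` with `l, r > 0`, then the chain is ergodic (unique invariant probability
measure on `[0,1]`, with total variation convergence of the `n`-step laws from every starting
point), and the invariant measure has density
`π(x) = C x^l (r/(1-x) + l/x) exp(-r∫_{1/2}^x p/(1-t) dt - l∫_{1/2}^x p/t dt)` on `(0,1)`,
where `C > 0` normalises `∫₀¹ π = 1`. -/
theorem stmt11 (l r : ℝ) (hl : 0 < l) (hr : 0 < r)
    (p : ℝ → ℝ) (hpm : Measurable p) (hppc : PiecewiseContinuousOn p (Icc 0 1))
    (hp01 : ∀ x ∈ Icc (0 : ℝ) 1, p x ∈ Icc (0 : ℝ) 1)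
    (δ ε : ℝ) (hδ : δ ∈ Ioo (0 : ℝ) (1 / 2)) (hε : 0 < ε)
    (hE1 : (⨆ x ∈ Icc (0 : ℝ) δ, max (p x) (1 - p (1 - x))) = 1 - ε)
    (FL FR : Measure ℝ) (hFL : FL = betaMeasure 1 l) (hFR : FR = betaMeasure 1 r) :
    ∃ μ : Measure ℝ, IsProbabilityMeasure μ ∧ μ (Icc 0 1) = 1 ∧
      μ.bind (mcKernel FL FR p) = μ ∧
      (∀ ν : Measure ℝ, IsProbabilityMeasure ν → ν (Icc 0 1) = 1 →
        ν.bind (mcKernel FL FR p) = ν → ν = μ) ∧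
      (∀ x ∈ Icc (0 : ℝ) 1,
        Tendsto (fun n => tvDist (iterLaw (mcKernel FL FR p) x n) μ) atTop (nhds 0)) ∧
      ∃ C : ℝ, 0 < C ∧ (∫ x in Ioo (0 : ℝ) 1, statDens l r C p x) = 1 ∧
        μ = volume.withDensity fun x =>
          indicator (Ioo (0 : ℝ) 1) (fun z => ENNReal.ofReal (statDens l r C p z)) x := by
  subst hFL hFR
  have hbound : ∀ x ∈ Icc (0 : ℝ) δ, max (p x) (1 - p (1 - x)) ≤ 1 - ε := fun x hx =>
    le_of_iSup_eq (f := fun x => max (p x) (1 - p (1 - x))) zero_le_one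
      (fun y hy => max_le (hp01 y ⟨hy.1, by linarith [hy.2, hδ.2]⟩).2
        (by linarith [(hp01 (1 - y) ⟨by linarith [hy.2, hδ.2], by linarith [hy.1]⟩).1])) hE1 hx
  have hleft : ∀ x ∈ Icc (0 : ℝ) δ, ε ≤ 1 - p x := fun x hx => by
    linarith [(le_max_left _ _).trans (hbound x hx)]
  have hright : ∀ x ∈ Icc (1 - δ) 1, ε ≤ p x := fun x hx => by
    have := (le_max_right _ _).trans (hbound (1 - x) ⟨by linarith [hx.2], by linarith [hx.1]⟩)
    rw [sub_sub_cancel] at this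
    linarith
  obtain ⟨S, hS, -⟩ := hppc
  have hSc : ∀ x ∈ Ioo (0 : ℝ) 1 \ (S : Set ℝ), ContinuousAt p x := fun x hx =>
    (hS x ⟨Ioo_subset_Icc_self hx.1, hx.2⟩).continuousAt (Icc_mem_nhds hx.1.1 hx.1.2)
  have := isProbabilityMeasure_betaMeasure hl
  have := isProbabilityMeasure_betaMeasure hr
  have hκm : Measurable (mcKernel (betaMeasure 1 l) (betaMeasure 1 r) p) :=
    measurable_mcKernel _ _ hpm
  have hκp := isProbabilityMeasure_mcKernel (betaMeasure 1 l) (betaMeasure 1 r) hpm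
  have hsupp : ∀ x ∈ Icc (0 : ℝ) 1,
      mcKernel (betaMeasure 1 l) (betaMeasure 1 r) p x (Icc (0 : ℝ) 1)ᶜ = 0 :=
    fun x hx => mcKernel_compl_Icc hl hr hpm hp01 hx
  obtain ⟨η, hηf, hη0, hη⟩ := exists_two_step_minorant hl hr hpm hp01 hδ hε hleft hright
  obtain ⟨C, hC, hmass, μ, hμd, hμp, hμI, hinv⟩ :=
    exists_normalised hl hr hpm hp01 S.countable_toSet hSc hδ hε hleft hright
  exact ⟨μ, hμp, hμI, hinv,
    fun ν hν hνI hνinv => invariant_unique hκm hκp hsupp hη hη0 hμI hinv hνI hνinv,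
    fun x hx => tendsto_tvDist_iterLaw hκm hκp hsupp hη hη0 hμI hinv hx, C, hC, hmass, hμd⟩
end
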